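/- Let f be an analytic function in an open neighbourhood U of the closed unit disk D_1. Assume f has in D_1 exactly s zeroes (counted with multiplicity) and is (s,p)-valent in D_1. Let Z be a subset of the interior of D_1 and put ρ = ρ(Z) = min{η : Z ⊂ D_η} < 1. Then for every 0 < R < 1 and every α > 0 with c_{s,α}(Z) > 0, max_{|z| ≤ R} |f(z)| ≤ σ_p(R,ρ) · (6e^{1/α}/c_{s,α}(Z))^s · max_{z ∈ Z} |f(z)|, where σ_p(R,ρ) = (((1+R)/(1−R))·((1+ρ)/(1−ρ)))^{2p}. In particular, max_{|z| ≤ R} |f(z)| ≤ σ_p(R,ρ)·K_s(Z)·max_{Z}|f(z)| with K_s(Z) = inf_{α>0} (6e^{1/α}/c_{s,α}(Z))^s. -/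

import Mathlib

-- The order of vanishing of `g` at `z` (zero if `g` is not analytic at `z`).
open scoped Classical in
noncomputable def ordAt (g : ℂ → ℂ) (z : ℂ) : ℕ∞ :=
  if h : AnalyticAt ℂ g z then analyticOrderAt g z else 0

/-- The number of zeroes of `g` in `Ω`, counted with multiplicity. -/
noncomputable def solCount (g : ℂ → ℂ) (Ω : Set ℂ) : ℕ∞ :=
  ∑' z : Ω, ordAt g z

/-- `f` is `(s,p)`-valent in `Ω`: for every polynomial `P` of degree at most `s`,
the equation `f = P` has at most `p` solutions in `Ω`, counted with multiplicity. -/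
def IsSPValentOn (f : ℂ → ℂ) (Ω : Set ℂ) (s p : ℕ) : Prop :=
  ∀ P : Polynomial ℂ, P.degree ≤ (s : ℕ) →
    solCount (fun z => f z - P.eval z) Ω ≤ (p : ℕ∞)

/-- `g` is `p`-valent in `Ω`: for every constant `c`, the equation `g = c` has
at most `p` solutions in `Ω`, counted with multiplicity. -/
def IsPValentOn (g : ℂ → ℂ) (Ω : Set ℂ) (p : ℕ) : Prop :=
  ∀ c : ℂ, solCount (fun z => g z - c) Ω ≤ (p : ℕ∞)

/-- The `(d,α)`-Cartan measure of a set `Z ⊆ ℂ`: the infimum of `(∑ r_j^α)^{1/α}` over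
all coverings of `Z` by at most `d` disks with positive radii `r_j`. -/
noncomputable def cartanMeasure (d : ℕ) (α : ℝ) (Z : Set ℂ) : ℝ :=
  sInf {t : ℝ | ∃ (p : ℕ) (w : Fin p → ℂ) (r : Fin p → ℝ), p ≤ d ∧ (∀ j, 0 < r j) ∧
    Z ⊆ (⋃ j, Metric.closedBall (w j) (r j)) ∧ t = (∑ j, r j ^ α) ^ (1 / α)}

lemma enat_summable {ι : Type*} (f : ι → ℕ∞) : Summable f :=
  ⟨_, hasSum_of_isLUB_of_nonneg _ (fun _ => bot_le) (isLUB_iSup)⟩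

lemma solCount_step (U : Set ℂ) (hU : IsOpen U) (F : ℂ → ℂ) (hF : DifferentiableOn ℂ F U)
    (K : Set ℂ) (hK : K ⊆ U) (z₀ : ℂ) (hz : z₀ ∈ K) (h0 : F z₀ = 0) :
    solCount F K = solCount (dslope F z₀) K + 1 := by
  classical
  have hd : DifferentiableOn ℂ (dslope F z₀) U :=
    (Complex.differentiableOn_dslope (hU.mem_nhds (hK hz))).mpr hF
  have key : ∀ z : K, ordAt F z = ordAt (dslope F z₀) z + (if z = ⟨z₀, hz⟩ then 1 else 0) := by
    rintro ⟨z, hzK⟩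
    have a1 : AnalyticAt ℂ F z := hF.analyticAt (hU.mem_nhds (hK hzK))
    have a2 : AnalyticAt ℂ (dslope F z₀) z := hd.analyticAt (hU.mem_nhds (hK hzK))
    have a3 : AnalyticAt ℂ (fun z : ℂ => z - z₀) z := by fun_prop
    have e : F = (dslope F z₀) * (fun z : ℂ => z - z₀) := by
      funext w
      have := sub_smul_dslope F z₀ w
      simp only [smul_eq_mul, h0, sub_zero] at this
      simp only [Pi.mul_apply]
      rw [← this]; ring
    have e2 : analyticOrderAt F z = analyticOrderAt (dslope F z₀) z
        + analyticOrderAt (fun z : ℂ => z - z₀) z := by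
      conv_lhs => rw [e]
      exact analyticOrderAt_mul a2 a3
    simp only [ordAt, a1, a2, dif_pos, e2]
    congr 1
    by_cases h : z = z₀
    · subst h
      simp
    · have : ¬ (⟨z, hzK⟩ : K) = ⟨z₀, hz⟩ := by simpa using h
      rw [if_neg this, analyticOrderAt_eq_zero]
      right
      exact sub_ne_zero.mpr h
  unfold solCount
  rw [tsum_congr key, Summable.tsum_add (enat_summable _) (enat_summable _), tsum_ite_eq]

lemma factor_exists (U : Set ℂ) (hU : IsOpen U) (K : Set ℂ) (hK : K ⊆ U) (n : ℕ) :
    ∀ (F : ℂ → ℂ) (_ : DifferentiableOn ℂ F U) (_ : solCount F K = (n : ℕ∞)),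
    ∃ (S : Multiset ℂ) (h : ℂ → ℂ), Multiset.card S = n ∧ (∀ x ∈ S, x ∈ K) ∧ DifferentiableOn ℂ h U ∧
      (∀ z ∈ K, h z ≠ 0) ∧ ∀ z, F z = (S.map (fun x => z - x)).prod * h z := by
  induction n with
  | zero =>
    intro F hF hs
    refine ⟨0, F, by simp, by simp, hF, ?_, by simp⟩
    intro z hz h0
    have := solCount_step U hU F hF K hK z hz h0
    rw [hs] at this
    have h1 : (1 : ℕ∞) ≤ ((0 : ℕ) : ℕ∞) := this ▸ le_add_self
    simp at h1
  | succ n ih =>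
    intro F hF hs
    have : ∃ z ∈ K, F z = 0 := by
      by_contra hcon
      push Not at hcon
      have : solCount F K = 0 := by
        unfold solCount
        have : ∀ z : K, ordAt F z = 0 := by
          intro z
          unfold ordAt
          split_ifs with h
          · rw [analyticOrderAt_eq_zero]; right; exact hcon z z.2
          · rfl
        rw [tsum_congr this, tsum_zero]
      rw [hs] at this
      simp at this
    obtain ⟨z₀, hz, h0⟩ := this
    have st := solCount_step U hU F hF K hK z₀ hz h0
    rw [hs] at st
    have hd : DifferentiableOn ℂ (dslope F z₀) U :=
      (Complex.differentiableOn_dslope (hU.mem_nhds (hK hz))).mpr hF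
    have st' : solCount (dslope F z₀) K = (n : ℕ∞) := by
      push_cast at st
      exact (ENat.add_left_injective_of_ne_top ENat.one_ne_top st).symm
    obtain ⟨S, h, hc, hS, hh, hne, hfac⟩ := ih _ hd st'
    refine ⟨z₀ ::ₘ S, h, by simp [hc], ?_, hh, hne, ?_⟩
    · intro x hx
      rcases Multiset.mem_cons.mp hx with rfl | hx
      · exact hz
      · exact hS x hx
    · intro z
      have := sub_smul_dslope F z₀ z
      simp only [smul_eq_mul, h0, sub_zero] at this
      rw [← this, hfac z]
      simp [mul_assoc]

lemma cartan_greedy (r : ℕ → ℝ) (hr : Monotone r) (n : ℕ) :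
    ∀ S : Multiset ℂ, Multiset.card S ≤ n → ∃ L : List (ℂ × ℕ), (∀ a ∈ L, 1 ≤ a.2) ∧
      (L.map Prod.snd).sum ≤ Multiset.card S ∧
      ∀ z : ℂ, (∃ k, 1 ≤ k ∧ k ≤ Multiset.card (S.filter (fun x => ‖z - x‖ ≤ r k))) →
        ∃ a ∈ L, ‖z - a.1‖ ≤ 2 * r a.2 := by
  classical
  induction n with
  | zero =>
    intro S hS
    refine ⟨[], by simp, by simp, ?_⟩
    rintro z ⟨k, hk, hk2⟩
    have := Multiset.card_le_card (Multiset.filter_le (fun x => ‖z - x‖ ≤ r k) S)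
    omega
  | succ n ih =>
    intro S hS
    by_cases hex : ∃ k, 1 ≤ k ∧ ∃ w : ℂ, k ≤ Multiset.card (S.filter (fun x => ‖w - x‖ ≤ r k))
    swap
    · refine ⟨[], by simp, by simp, ?_⟩
      rintro z ⟨k, hk, hk2⟩
      exact absurd ⟨k, hk, z, hk2⟩ hex
    let Q : ℕ → Prop := fun k => 1 ≤ k ∧ ∃ w : ℂ, k ≤ Multiset.card (S.filter (fun x => ‖w - x‖ ≤ r k))
    have hb : ∀ k, Q k → k ≤ Multiset.card S := by
      rintro k ⟨_, w, hw⟩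
      exact hw.trans (Multiset.card_le_card (Multiset.filter_le _ S))
    obtain ⟨k1, hk1⟩ := hex
    have hQ1 : Q k1 := hk1
    let K := Nat.findGreatest Q (Multiset.card S)
    have hK : Q K := Nat.findGreatest_spec (hb _ hQ1) hQ1
    have hmax : ∀ k, Q k → k ≤ K := fun k hk => Nat.le_findGreatest (hb k hk) hk
    obtain ⟨hK1, w, hw⟩ := hK
    let T := S.filter (fun x => ¬ ‖w - x‖ ≤ r K)
    have hT : Multiset.card T + K ≤ Multiset.card S := by
      have := congrArg Multiset.card (Multiset.filter_add_not (fun x => ‖w - x‖ ≤ r K) S)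
      rw [Multiset.card_add] at this
      simp only [T]
      omega
    obtain ⟨L, hL1, hL2, hL3⟩ := ih T (by omega)
    refine ⟨(w, K) :: L, ?_, ?_, ?_⟩
    · intro a ha
      rcases List.mem_cons.mp ha with rfl | ha
      · exact hK1
      · exact hL1 a ha
    · simp only [List.map_cons, List.sum_cons]
      omega
    · rintro z ⟨k, hk, hk2⟩
      have hkK : k ≤ K := hmax k ⟨hk, z, hk2⟩
      have hrk : r k ≤ r K := hr hkK
      by_cases hd : ‖z - w‖ ≤ 2 * r K
      · exact ⟨(w, K), by simp, hd⟩
      · have : S.filter (fun x => ‖z - x‖ ≤ r k) = T.filter (fun x => ‖z - x‖ ≤ r k) := by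
          simp only [T, Multiset.filter_filter]
          apply Multiset.filter_congr
          intro x _
          constructor
          · intro h
            refine ⟨h, fun h2 => hd ?_⟩
            have : ‖z - w‖ ≤ ‖z - x‖ + ‖w - x‖ := by
              rw [show z - w = (z - x) - (w - x) by ring]; exact norm_sub_le _ _
            linarith
          · exact fun h => h.1
        rw [this] at hk2
        obtain ⟨a, ha, ha2⟩ := hL3 z ⟨k, hk, hk2⟩
        exact ⟨a, List.mem_cons_of_mem _ ha, ha2⟩

lemma prod_lower (r : ℕ → ℝ) (hr0 : ∀ k, 0 ≤ r k) (n : ℕ) :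
    ∀ D : Multiset ℝ, (∀ x ∈ D, 0 ≤ x) → Multiset.card D = n →
      (∀ k, 1 ≤ k → Multiset.card (D.filter (fun x => x ≤ r k)) < k) →
      ∏ k ∈ Finset.range n, r (k + 1) ≤ D.prod := by
  classical
  induction n with
  | zero =>
    intro D _ hD _
    rw [Multiset.card_eq_zero] at hD
    simp [hD]
  | succ n ih =>
    intro D h0 hD hk
    have : ∃ x ∈ D, r (n + 1) < x := by
      by_contra hcon
      push Not at hcon
      have h1 := hk (n + 1) (by omega)
      rw [Multiset.filter_eq_self.mpr hcon] at h1
      omega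
    obtain ⟨x, hx, hxr⟩ := this
    have hDe : x ::ₘ D.erase x = D := Multiset.cons_erase hx
    have := ih (D.erase x) (fun y hy => h0 y (Multiset.mem_of_mem_erase hy))
      (by rw [Multiset.card_erase_of_mem hx, hD]; rfl)
      (fun k hk1 => lt_of_le_of_lt (Multiset.card_le_card
        (Multiset.filter_le_filter _ (Multiset.erase_le x D))) (hk k hk1))
    rw [Finset.prod_range_succ, ← hDe, Multiset.prod_cons, mul_comm]
    apply mul_le_mul hxr.le this (Finset.prod_nonneg fun _ _ => hr0 _) (h0 x hx)

lemma cartan_lemma (s : ℕ) (hs : 1 ≤ s) (α : ℝ) (hα : 0 < α) (Z : Set ℂ) (S : Multiset ℂ)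
    (hS : Multiset.card S = s) (h : ℝ) (hh : 0 < h)
    (hc : 2 * h * Real.exp (1 / α) < cartanMeasure s α Z) :
    ∃ z ∈ Z, h ^ s ≤ (S.map (fun x => ‖z - x‖)).prod := by
  classical
  have hs0 : (0 : ℝ) < s := by exact_mod_cast hs
  set H : ℝ := Real.exp 1 * h ^ α / s with hH
  have hH0 : 0 < H := by positivity
  let r : ℕ → ℝ := fun k => (k * H) ^ (1 / α)
  have hr0 : ∀ k, 0 ≤ r k := fun k => by positivity
  have hrm : Monotone r := by
    intro a b hab
    apply Real.rpow_le_rpow (by positivity) _ (by positivity)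
    have : (a : ℝ) ≤ b := by exact_mod_cast hab
    gcongr
  obtain ⟨L, hL1, hL2, hL3⟩ := cartan_greedy r hrm s S hS.le
  have hlen : L.length ≤ s := by
    rw [hS] at hL2
    refine le_trans ?_ hL2
    have := List.length_le_sum_of_one_le (L.map Prod.snd) (by
      intro i hi
      obtain ⟨a, ha, rfl⟩ := List.mem_map.mp hi
      exact hL1 a ha)
    simpa using this
  have hnot : ∃ z ∈ Z, ¬ ∃ a ∈ L, ‖z - a.1‖ ≤ 2 * r a.2 := by
    by_contra hcon
    push Not at hcon
    have hmem : (∑ j : Fin L.length, (2 * r (L.get j).2) ^ α) ^ (1 / α) ∈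
        {t : ℝ | ∃ (p : ℕ) (w : Fin p → ℂ) (r : Fin p → ℝ), p ≤ s ∧ (∀ j, 0 < r j) ∧
    Z ⊆ (⋃ j, Metric.closedBall (w j) (r j)) ∧ t = (∑ j, r j ^ α) ^ (1 / α)} := by
      refine ⟨L.length, fun j => (L.get j).1, fun j => 2 * r (L.get j).2, hlen, ?_, ?_, rfl⟩
      · intro j
        have : 1 ≤ (L.get j).2 := hL1 _ (List.get_mem L j)
        have : (0 : ℝ) < (L.get j).2 := by exact_mod_cast this
        have : 0 < r (L.get j).2 := by simp only [r]; positivity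
        positivity
      · intro z hz
        obtain ⟨a, ha, hza⟩ := hcon z hz
        obtain ⟨j, rfl⟩ := List.mem_iff_get.mp ha
        refine Set.mem_iUnion.mpr ⟨j, ?_⟩
        rw [Metric.mem_closedBall, dist_eq_norm]
        exact hza
    have hle : cartanMeasure s α Z ≤ _ := csInf_le ⟨0, by
      rintro t ⟨p, w, r, _, hr, _, rfl⟩
      exact Real.rpow_nonneg (Finset.sum_nonneg fun j _ => Real.rpow_nonneg (hr j).le _) _⟩ hmem
    have hsum : (∑ j : Fin L.length, (2 * r (L.get j).2) ^ α) ≤ (2 * h * Real.exp (1 / α)) ^ α := by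
      have e1 : ∀ j : Fin L.length, (2 * r (L.get j).2) ^ α = 2 ^ α * H * ((L.get j).2 : ℝ) := by
        intro j
        rw [Real.mul_rpow (by norm_num) (hr0 _)]
        simp only [r]
        rw [← Real.rpow_mul (by positivity), one_div, inv_mul_cancel₀ hα.ne', Real.rpow_one]
        ring
      rw [Finset.sum_congr rfl (fun j _ => e1 j), ← Finset.mul_sum]
      have e2 : (∑ j : Fin L.length, ((L.get j).2 : ℝ)) ≤ s := by
        rw [hS] at hL2
        have : (∑ j : Fin L.length, (L.get j).2) = (L.map Prod.snd).sum := by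
          rw [← Fin.sum_univ_fun_getElem]; rfl
        have h2 : (∑ j : Fin L.length, (L.get j).2) ≤ s := by omega
        exact_mod_cast h2
      calc 2 ^ α * H * (∑ j : Fin L.length, ((L.get j).2 : ℝ)) ≤ 2 ^ α * H * s := by gcongr
        _ = (2 * h * Real.exp (1 / α)) ^ α := by
          rw [Real.mul_rpow (by positivity) (by positivity), Real.mul_rpow (by positivity) hh.le,
            ← Real.exp_mul, one_div, inv_mul_cancel₀ hα.ne', hH]
          field_simp
    have : (∑ j : Fin L.length, (2 * r (L.get j).2) ^ α) ^ (1 / α) ≤ 2 * h * Real.exp (1 / α) := by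
      calc _ ≤ ((2 * h * Real.exp (1 / α)) ^ α) ^ (1 / α) := by
            apply Real.rpow_le_rpow _ hsum (by positivity)
            exact Finset.sum_nonneg fun j _ => Real.rpow_nonneg (by have := hr0 (L.get j).2; positivity) _
        _ = _ := by
            rw [← Real.rpow_mul (by positivity), one_div, mul_inv_cancel₀ hα.ne', Real.rpow_one]
    linarith
  obtain ⟨z, hz, hzn⟩ := hnot
  refine ⟨z, hz, ?_⟩
  have hreg : ∀ k, 1 ≤ k → Multiset.card ((S.map (fun x => ‖z - x‖)).filter (fun x => x ≤ r k)) < k := by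
    intro k hk
    rw [Multiset.filter_map, Multiset.card_map]
    by_contra hcon
    push Not at hcon
    exact hzn (hL3 z ⟨k, hk, hcon⟩)
  have := prod_lower r hr0 s (S.map (fun x => ‖z - x‖)) (by
    intro x hx
    obtain ⟨y, _, rfl⟩ := Multiset.mem_map.mp hx
    positivity) (by simp [hS]) hreg
  refine le_trans ?_ this
  have e : ∏ k ∈ Finset.range s, r (k + 1) = (s.factorial * H ^ s) ^ (1 / α) := by
    simp only [r]
    rw [Real.finsetProd_rpow _ _ (fun i _ => by positivity), Finset.prod_mul_distrib]
    congr 2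
    · rw [← Finset.prod_range_add_one_eq_factorial]; push_cast; rfl
    · simp
  rw [e]
  have e3 : h ^ s = ((h ^ s) ^ α) ^ (1 / α) := by
    rw [← Real.rpow_mul (by positivity), one_div, mul_inv_cancel₀ hα.ne', Real.rpow_one]
  rw [e3]
  apply Real.rpow_le_rpow (by positivity) _ (by positivity)
  have e4 : (h ^ s) ^ α = (h ^ α) ^ s := by
    rw [← Real.rpow_natCast, ← Real.rpow_natCast, ← Real.rpow_mul hh.le, ← Real.rpow_mul hh.le, mul_comm]
  rw [e4, hH, div_pow, mul_pow, ← Real.exp_nat_mul, mul_one]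
  have e5 := Real.pow_div_factorial_le_exp (s : ℝ) hs0.le s
  rw [div_le_iff₀ (by positivity)] at e5
  rw [← mul_div_assoc, le_div_iff₀ (by positivity)]
  have : 0 ≤ (h ^ α) ^ s := by positivity
  nlinarith


theorem wirt_zero (Y Y' : ℝ → ℂ) (hd : ∀ x, HasDerivAt Y (Y' x) x) (hc : Continuous Y')
    (hper : Y (2 * Real.pi) = Y 0) (hmean : ∫ x in (0:ℝ)..(2 * Real.pi), Y x = 0) :
    ∫ x in (0:ℝ)..(2 * Real.pi), ‖Y x‖ ^ 2 ≤ ∫ x in (0:ℝ)..(2 * Real.pi), ‖Y' x‖ ^ 2 := by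
  have hab : (0:ℝ) < 2 * Real.pi := by positivity
  have hYc : Continuous Y := continuous_iff_continuousAt.2 fun x => (hd x).continuousAt
  have hL : ∀ F : ℝ → ℂ, Continuous F →
      MeasureTheory.MemLp F 2 (MeasureTheory.volume.restrict (Set.Ioc 0 (2 * Real.pi))) := by
    intro F hF
    obtain ⟨C, hC⟩ := (isCompact_Icc (a := (0:ℝ)) (b := 2 * Real.pi)).exists_bound_of_continuousOn
      hF.continuousOn
    refine MeasureTheory.MemLp.of_bound hF.aestronglyMeasurable C ?_
    refine (MeasureTheory.ae_restrict_iff' measurableSet_Ioc).2 (Filter.Eventually.of_forall ?_)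
    intro x hx
    exact hC x (Set.Ioc_subset_Icc_self hx)
  have h1 := hasSum_sq_fourierCoeffOn hab (hL Y hYc)
  have h2 := hasSum_sq_fourierCoeffOn hab (hL Y' hc)
  have key := hasSum_le (f := fun i => ‖fourierCoeffOn hab Y i‖ ^ 2)
    (g := fun i => ‖fourierCoeffOn hab Y' i‖ ^ 2) ?_ h1 h2
  · simp only [smul_eq_mul, sub_zero] at key
    exact le_of_mul_le_mul_left key (by positivity)
  intro n
  by_cases hn : n = 0
  · subst hn
    have : fourierCoeffOn hab Y 0 = 0 := by
      rw [fourierCoeffOn_eq_integral]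
      simp [hmean]
    simp [this]
  · have h3 := fourierCoeffOn_of_hasDerivAt hab hn (fun x _ => hd x) (hc.intervalIntegrable _ _)
    rw [hper] at h3
    simp only [sub_self, mul_zero, zero_sub] at h3
    have h4 : ‖fourierCoeffOn hab Y n‖ ≤ ‖fourierCoeffOn hab Y' n‖ := by
      rw [h3]
      have e : (1 / (-2 * (Real.pi:ℂ) * Complex.I * n) * (-(((2 * Real.pi : ℝ) : ℂ)
          * fourierCoeffOn hab Y' n))) = (1 / (Complex.I * n)) * fourierCoeffOn hab Y' n := by
        have : (Real.pi : ℂ) ≠ 0 := by exact_mod_cast Real.pi_ne_zero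
        have hn' : (n : ℂ) ≠ 0 := by exact_mod_cast hn
        push_cast
        field_simp
      have e2 : ((2 * Real.pi : ℝ) : ℂ) - ((0 : ℝ) : ℂ) = ((2 * Real.pi : ℝ) : ℂ) := by simp
      simp only [e2] at *
      rw [e, norm_mul]
      have : ‖(1 / (Complex.I * (n:ℂ)))‖ ≤ 1 := by
        simp only [norm_div, norm_mul, Complex.norm_I, one_mul, norm_one]
        have h5 : (1:ℝ) ≤ ‖(n:ℂ)‖ := by
          rw [Complex.norm_intCast]
          exact_mod_cast Int.one_le_abs hn
        rw [div_le_one (by linarith)]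
        exact h5
      nlinarith [norm_nonneg (fourierCoeffOn hab Y' n)]
    gcongr

theorem wirt (y y' : ℝ → ℂ) (hd : ∀ x, HasDerivAt y (y' x) x) (hc : Continuous y')
    (hper : y (2 * Real.pi) = y 0) :
    ∫ x in (0:ℝ)..(2 * Real.pi), ((starRingEnd ℂ) (y x) * y' x).im
      ≤ ∫ x in (0:ℝ)..(2 * Real.pi), ‖y' x‖ ^ 2 := by
  have hyc : Continuous y := continuous_iff_continuousAt.2 fun x => (hd x).continuousAt
  have hpi : (Real.pi : ℂ) ≠ 0 := by exact_mod_cast Real.pi_ne_zero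
  set m : ℂ := (1 / (2 * Real.pi : ℂ)) * ∫ x in (0:ℝ)..(2 * Real.pi), y x with hm
  have h0 := wirt_zero (fun x => y x - m) y' (fun x => (hd x).sub_const m) hc (by simp [hper]) (by
    rw [intervalIntegral.integral_sub (hyc.intervalIntegrable _ _) (by simp)]
    rw [intervalIntegral.integral_const, hm]
    simp only [sub_zero, Complex.real_smul]
    push_cast
    field_simp
    simp)
  have h1 : ∫ x in (0:ℝ)..(2 * Real.pi), y' x = 0 := by
    rw [intervalIntegral.integral_eq_sub_of_hasDerivAt (fun x _ => hd x)
      (hc.intervalIntegrable _ _), hper, sub_self]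
  have h2 : ∫ x in (0:ℝ)..(2 * Real.pi), ((starRingEnd ℂ) m * y' x).im = 0 := by
    have h3 : ∫ x in (0:ℝ)..(2 * Real.pi), Complex.imCLM ((starRingEnd ℂ) m * y' x)
        = Complex.imCLM (∫ x in (0:ℝ)..(2 * Real.pi), ((starRingEnd ℂ) m * y' x)) :=
      ContinuousLinearMap.intervalIntegral_comp_comm _
        ((continuous_const.mul hc).intervalIntegrable _ _)
    simp only [Complex.imCLM_apply] at h3
    rw [h3, intervalIntegral.integral_const_mul, h1]
    simp
  have hpos : (0:ℝ) ≤ 2 * Real.pi := by positivity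
  have h4 : ∫ x in (0:ℝ)..(2 * Real.pi), ((starRingEnd ℂ) (y x) * y' x).im
      ≤ ∫ x in (0:ℝ)..(2 * Real.pi), (((starRingEnd ℂ) m * y' x).im +
        ((1/2) * ‖y x - m‖ ^ 2 + (1/2) * ‖y' x‖ ^ 2)) := by
    apply intervalIntegral.integral_mono_on hpos
    · exact Continuous.intervalIntegrable (by fun_prop) _ _
    · exact Continuous.intervalIntegrable (by fun_prop) _ _
    · intro x _
      have e : (starRingEnd ℂ) (y x) * y' x
        = (starRingEnd ℂ) m * y' x + (starRingEnd ℂ) (y x - m) * y' x := by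
        rw [map_sub]; ring
      rw [e, Complex.add_im]
      have h5 : ((starRingEnd ℂ) (y x - m) * y' x).im ≤ ‖y x - m‖ * ‖y' x‖ := by
        refine (Complex.abs_im_le_norm _).trans' (le_abs_self _) |>.trans ?_
        rw [norm_mul, Complex.norm_conj]
      nlinarith [sq_nonneg (‖y x - m‖ - ‖y' x‖)]
  rw [intervalIntegral.integral_add (Continuous.intervalIntegrable (by fun_prop) _ _)
    (Continuous.intervalIntegrable (by fun_prop) _ _), h2,
    intervalIntegral.integral_add (Continuous.intervalIntegrable (by fun_prop) _ _)
    (Continuous.intervalIntegrable (by fun_prop) _ _),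
    intervalIntegral.integral_const_mul, intervalIntegral.integral_const_mul] at h4
  linarith

theorem hasDerivAt_tanh' (x : ℝ) : HasDerivAt Real.tanh (1 - Real.tanh x ^ 2) x := by
  have h := (Real.hasDerivAt_sinh x).div (Real.hasDerivAt_cosh x) (Real.cosh_pos x).ne'
  have e : Real.tanh = Real.sinh / Real.cosh := by
    funext y; simp [Real.tanh_eq_sinh_div_cosh]
  rw [e]
  refine h.congr_deriv ?_
  have := (Real.cosh_pos x).ne'
  simp only [Pi.div_apply]
  field_simp

@[fun_prop]
theorem continuous_tanh' : Continuous Real.tanh :=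
  continuous_iff_continuousAt.2 fun x => (hasDerivAt_tanh' x).continuousAt

theorem diff_int (G G' : ℝ → ℝ → ℝ)
    (hd : ∀ r ∈ Set.Ioo (-1:ℝ) 1, ∀ θ, HasDerivAt (fun r => G r θ) (G' r θ) r)
    (hc : ContinuousOn (fun q : ℝ × ℝ => G' q.1 q.2) (Set.Ioo (-1:ℝ) 1 ×ˢ Set.univ))
    (hG : ∀ r ∈ Set.Ioo (-1:ℝ) 1, Continuous (G r))
    (r : ℝ) (hr : r ∈ Set.Ioo (-1:ℝ) 1) :
    HasDerivAt (fun r => ∫ θ in (0:ℝ)..(2 * Real.pi), G r θ)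
      (∫ θ in (0:ℝ)..(2 * Real.pi), G' r θ) r := by
  obtain ⟨ε, hε, hεs⟩ := Metric.nhds_basis_closedBall.mem_iff.1 (isOpen_Ioo.mem_nhds hr)
  have hcomp : IsCompact (Metric.closedBall r ε ×ˢ Set.Icc (0:ℝ) (2 * Real.pi)) :=
    (isCompact_closedBall r ε).prod isCompact_Icc
  obtain ⟨C, hC⟩ := hcomp.exists_bound_of_continuousOn
    (hc.mono (Set.prod_mono hεs (Set.subset_univ _)))
  have hpos : (0:ℝ) ≤ 2 * Real.pi := by positivity
  have hcr : Continuous (G' r) := by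
    have : ContinuousOn (fun θ : ℝ => G' r θ) Set.univ :=
      hc.comp (f := fun θ : ℝ => (r, θ)) (by fun_prop) (fun θ _ => ⟨hr, trivial⟩)
    exact continuousOn_univ.1 this
  refine (intervalIntegral.hasDerivAt_integral_of_dominated_loc_of_deriv_le
    (bound := fun _ => C) (Metric.closedBall_mem_nhds r hε) ?_
    ((hG r hr).intervalIntegrable _ _) hcr.aestronglyMeasurable ?_ (by simp) ?_).2
  · filter_upwards [isOpen_Ioo.mem_nhds hr] with x hx
    exact (hG x hx).aestronglyMeasurable
  · refine Filter.Eventually.of_forall fun t ht x hx => hC (x, t) ⟨hx, ?_⟩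
    rw [Set.uIoc_of_le hpos] at ht
    exact Set.Ioc_subset_Icc_self ht
  · exact Filter.Eventually.of_forall fun t ht x hx => hd x (hεs hx) t

noncomputable def zz (r θ : ℝ) : ℂ := (r : ℂ) * Complex.exp (θ * Complex.I)

noncomputable def tz (H : ℂ → ℂ) (r θ : ℝ) : ℂ := H (zz r θ)

@[fun_prop]
theorem zzc (r : ℝ) : Continuous (zz r) := by unfold zz; fun_prop

theorem norm_zz (r θ : ℝ) : ‖zz r θ‖ = |r| := by
  simp [zz, Complex.norm_exp_ofReal_mul_I]

theorem zz_mem {r : ℝ} (hr : r ∈ Set.Ioo (-1:ℝ) 1) (θ : ℝ) : zz r θ ∈ Metric.ball (0:ℂ) 1 := by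
  rw [mem_ball_zero_iff, norm_zz]
  exact abs_lt.2 hr

theorem zz_cont2 {H : ℂ → ℂ}
    (hH : ContinuousOn H (Metric.ball (0:ℂ) 1)) :
    ContinuousOn (fun q : ℝ × ℝ => tz H q.1 q.2) (Set.Ioo (-1:ℝ) 1 ×ˢ Set.univ) := by
  refine hH.comp (f := fun q : ℝ × ℝ => zz q.1 q.2) ?_ (fun q hq => zz_mem hq.1 _)
  unfold zz
  fun_prop

theorem zz_cont {H : ℂ → ℂ}
    (hH : ContinuousOn H (Metric.ball (0:ℂ) 1)) {r : ℝ} (hr : r ∈ Set.Ioo (-1:ℝ) 1) :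
    Continuous (tz H r) := by
  have : ContinuousOn (fun θ : ℝ => tz H r θ) Set.univ :=
    (zz_cont2 hH).comp (f := fun θ : ℝ => (r, θ)) (by fun_prop) (fun θ _ => ⟨hr, trivial⟩)
  exact continuousOn_univ.1 this

theorem zz_per (r : ℝ) : zz r (2 * Real.pi) = zz r 0 := by
  simp [zz]

theorem zz_dr (r θ : ℝ) : HasDerivAt (fun r => zz r θ) (Complex.exp (θ * Complex.I)) r := by
  unfold zz
  simpa using (Complex.ofRealCLM.hasDerivAt (x := r)).mul_const (Complex.exp (θ * Complex.I))

theorem zz_dth (r θ : ℝ) : HasDerivAt (fun θ => zz r θ) (Complex.I * zz r θ) θ := by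
  have e : (fun θ => zz r θ) = fun θ : ℝ => (r : ℂ) * Complex.exp (θ * Complex.I) := rfl
  rw [e]
  have h1 : HasDerivAt (fun θ : ℝ => (θ : ℂ) * Complex.I) Complex.I θ := by
    simpa using (Complex.ofRealCLM.hasDerivAt (x := θ)).mul_const Complex.I
  have := (h1.cexp).const_mul (r : ℂ)
  refine this.congr_deriv ?_
  rw [zz]
  ring

theorem hasDerivAt_re {f : ℝ → ℂ} {f' : ℂ} {x : ℝ} (h : HasDerivAt f f' x) :
    HasDerivAt (fun x => (f x).re) f'.re x :=
  (Complex.reCLM.hasFDerivAt.comp_hasDerivAt x h)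

theorem hasDerivAt_im {f : ℝ → ℂ} {f' : ℂ} {x : ℝ} (h : HasDerivAt f f' x) :
    HasDerivAt (fun x => (f x).im) f'.im x :=
  (Complex.imCLM.hasFDerivAt.comp_hasDerivAt x h)

theorem comp_dr {H : ℂ → ℂ} {H' : ℂ} {r θ : ℝ} (h : HasDerivAt H H' (zz r θ)) :
    HasDerivAt (fun r => tz H r θ) (H' * Complex.exp (θ * Complex.I)) r :=
  h.comp (𝕜' := ℂ) r (zz_dr r θ)

theorem comp_dth {H : ℂ → ℂ} {H' : ℂ} {r θ : ℝ} (h : HasDerivAt H H' (zz r θ)) :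
    HasDerivAt (fun θ => tz H r θ) (H' * (Complex.I * zz r θ)) θ :=
  h.comp (𝕜' := ℂ) θ (zz_dth r θ)

section ode

variable {ζ E E' : ℂ → ℂ}

noncomputable def KK (ζ E : ℂ → ℂ) (r : ℝ) : ℝ :=
  ∫ θ in (0:ℝ)..(2 * Real.pi), Real.tanh (tz ζ r θ).re * (zz r θ * tz E r θ).re

noncomputable def NN (ζ E : ℂ → ℂ) (r : ℝ) : ℝ :=
  ∫ θ in (0:ℝ)..(2 * Real.pi), (1 - Real.tanh (tz ζ r θ).re ^ 2) * ‖tz E r θ‖ ^ 2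

noncomputable def MM (ζ : ℂ → ℂ) (r : ℝ) : ℝ :=
  ∫ θ in (0:ℝ)..(2 * Real.pi), Real.log (Real.cosh (tz ζ r θ).re)

theorem KK_deriv (h1 : ∀ z ∈ Metric.ball (0:ℂ) 1, HasDerivAt ζ (E z) z)
    (h2 : ∀ z ∈ Metric.ball (0:ℂ) 1, HasDerivAt E (E' z) z)
    (h3 : ContinuousOn E' (Metric.ball (0:ℂ) 1)) (r : ℝ) (hr : r ∈ Set.Ioo (-1:ℝ) 1) :
    HasDerivAt (KK ζ E) (r * NN ζ E r) r := by
  have cζ : ContinuousOn ζ (Metric.ball (0:ℂ) 1) := fun z hz => (h1 z hz).continuousAt.continuousWithinAt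
  have cE : ContinuousOn E (Metric.ball (0:ℂ) 1) := fun z hz => (h2 z hz).continuousAt.continuousWithinAt
  have ct := continuous_tanh'
  have key := diff_int
    (fun r θ => Real.tanh (tz ζ r θ).re * (zz r θ * tz E r θ).re)
    (fun r θ => (1 - Real.tanh (tz ζ r θ).re ^ 2) * (tz E r θ * Complex.exp (θ * Complex.I)).re
        * (zz r θ * tz E r θ).re
      + Real.tanh (tz ζ r θ).re * (Complex.exp (θ * Complex.I) * tz E r θ +
          zz r θ * (tz E' r θ * Complex.exp (θ * Complex.I))).re)
    (fun r hr θ => by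
      have a1 := hasDerivAt_re (comp_dr (h1 _ (zz_mem hr θ)))
      have a2 := (hasDerivAt_tanh' _).comp r a1
      have a3 := hasDerivAt_re ((zz_dr r θ).mul (comp_dr (h2 _ (zz_mem hr θ))))
      exact a2.mul a3)
    (by
      have c1 := zz_cont2 cζ
      have c2 := zz_cont2 cE
      have c3 := zz_cont2 h3
      have c4 : ContinuousOn (fun q : ℝ × ℝ => zz q.1 q.2) (Set.Ioo (-1:ℝ) 1 ×ˢ Set.univ) :=
        zz_cont2 (continuousOn_id (s := Metric.ball (0:ℂ) 1))
      have c5 : ContinuousOn (fun q : ℝ × ℝ => Real.tanh (tz ζ q.1 q.2).re)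
        (Set.Ioo (-1:ℝ) 1 ×ˢ Set.univ) := ct.comp_continuousOn (Complex.continuous_re.comp_continuousOn c1)
      have c6 : ContinuousOn (fun q : ℝ × ℝ => Complex.exp ((q.2:ℂ) * Complex.I))
        (Set.Ioo (-1:ℝ) 1 ×ˢ Set.univ) := by fun_prop
      have re := fun (f : ℝ × ℝ → ℂ) (hf : ContinuousOn f (Set.Ioo (-1:ℝ) 1 ×ˢ Set.univ)) =>
        Complex.continuous_re.comp_continuousOn hf
      exact (((continuousOn_const.sub (c5.pow 2)).mul (re _ (c2.mul c6))).mul (re _ (c4.mul c2))).add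
        (c5.mul (re _ ((c6.mul c2).add (c4.mul (c3.mul c6))))))
    (fun r hr => by
      have c1 := zz_cont cζ hr
      have c2 := zz_cont cE hr
      fun_prop) r hr
  have c1 := zz_cont cζ hr
  have c2 := zz_cont cE hr
  have c3 := zz_cont h3 hr
  -- integration by parts
  have ibp : ∫ θ in (0:ℝ)..(2 * Real.pi), ((1 - Real.tanh (tz ζ r θ).re ^ 2) *
      (tz E r θ * (Complex.I * zz r θ)).re * (Complex.exp (θ * Complex.I) * tz E r θ).im
      + Real.tanh (tz ζ r θ).re * (Complex.exp (θ * Complex.I) * Complex.I * tz E r θ +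
          Complex.exp (θ * Complex.I) * (tz E' r θ * (Complex.I * zz r θ))).im) = 0 := by
    rw [intervalIntegral.integral_eq_sub_of_hasDerivAt (f := fun θ : ℝ => Real.tanh (tz ζ r θ).re *
      (Complex.exp (θ * Complex.I) * tz E r θ).im)]
    · simp [tz, zz_per]
    · intro θ _
      have a1 := hasDerivAt_re (comp_dth (h1 _ (zz_mem hr θ)))
      have a2 := (hasDerivAt_tanh' _).comp θ a1
      have b1 : HasDerivAt (fun θ : ℝ => (θ : ℂ) * Complex.I) Complex.I θ := by
        simpa using (Complex.ofRealCLM.hasDerivAt (x := θ)).mul_const Complex.I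
      have a3 := hasDerivAt_im ((b1.cexp).mul (comp_dth (h2 _ (zz_mem hr θ))))
      exact a2.mul a3
    · exact Continuous.intervalIntegrable (by fun_prop) _ _
  have fin : (∫ θ in (0:ℝ)..(2 * Real.pi),
      ((1 - Real.tanh (tz ζ r θ).re ^ 2) * (tz E r θ * Complex.exp (θ * Complex.I)).re
        * (zz r θ * tz E r θ).re
      + Real.tanh (tz ζ r θ).re * (Complex.exp (θ * Complex.I) * tz E r θ +
          zz r θ * (tz E' r θ * Complex.exp (θ * Complex.I))).re)) = r * NN ζ E r := by
    rw [← sub_eq_zero]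
    refine Eq.trans ?_ ibp
    rw [NN, ← intervalIntegral.integral_const_mul, ← intervalIntegral.integral_sub]
    · apply intervalIntegral.integral_congr
      intro θ _
      have hz : zz r θ = (r : ℂ) * Complex.exp (θ * Complex.I) := rfl
      have hn : ‖tz E r θ‖ ^ 2 = (tz E r θ * Complex.exp (θ * Complex.I)).re ^ 2
          + (tz E r θ * Complex.exp (θ * Complex.I)).im ^ 2 := by
        have : ‖tz E r θ‖ = ‖tz E r θ * Complex.exp (θ * Complex.I)‖ := by
          simp [Complex.norm_exp_ofReal_mul_I]
        rw [this, ← Complex.normSq_eq_norm_sq, Complex.normSq_apply]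
        ring
      simp only [hn]
      generalize tz E' r θ = e1
      generalize tz E r θ = e0
      generalize Real.tanh (tz ζ r θ).re = T
      rw [hz]
      generalize Complex.exp (θ * Complex.I) = w
      simp only [Complex.mul_re, Complex.mul_im, Complex.add_re, Complex.add_im, Complex.ofReal_re,
        Complex.ofReal_im, Complex.I_re, Complex.I_im]
      ring
    · exact Continuous.intervalIntegrable (by fun_prop) _ _
    · exact Continuous.intervalIntegrable (by fun_prop) _ _
  rw [← fin]
  exact key


theorem MM_deriv (h1 : ∀ z ∈ Metric.ball (0:ℂ) 1, HasDerivAt ζ (E z) z)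
    (cE : ContinuousOn E (Metric.ball (0:ℂ) 1)) (r : ℝ) (hr : r ∈ Set.Ioo (-1:ℝ) 1) :
    ∃ D, HasDerivAt (MM ζ) D r ∧ r * D = KK ζ E r := by
  have cζ : ContinuousOn ζ (Metric.ball (0:ℂ) 1) := fun z hz => (h1 z hz).continuousAt.continuousWithinAt
  have ct := continuous_tanh'
  have key := diff_int
    (fun r θ => Real.log (Real.cosh (tz ζ r θ).re))
    (fun r θ => Real.tanh (tz ζ r θ).re * (tz E r θ * Complex.exp (θ * Complex.I)).re)
    (fun r hr θ => by
      have a1 := hasDerivAt_re (comp_dr (h1 _ (zz_mem hr θ)))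
      have a2 := ((Real.hasDerivAt_cosh _).comp r a1).log (Real.cosh_pos _).ne'
      refine a2.congr_deriv ?_
      rw [Real.tanh_eq_sinh_div_cosh, tz, tz]
      simp only [Function.comp, tz]
      ring)
    (by
      have c1 := zz_cont2 cζ
      have c2 := zz_cont2 cE
      have c5 : ContinuousOn (fun q : ℝ × ℝ => Real.tanh (tz ζ q.1 q.2).re)
        (Set.Ioo (-1:ℝ) 1 ×ˢ Set.univ) := ct.comp_continuousOn (Complex.continuous_re.comp_continuousOn c1)
      have c6 : ContinuousOn (fun q : ℝ × ℝ => Complex.exp ((q.2:ℂ) * Complex.I))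
        (Set.Ioo (-1:ℝ) 1 ×ˢ Set.univ) := by fun_prop
      exact c5.mul (Complex.continuous_re.comp_continuousOn (c2.mul c6)))
    (fun r hr => by
      have c1 := zz_cont cζ hr
      have : ∀ θ, Real.cosh (tz ζ r θ).re ≠ 0 := fun θ => (Real.cosh_pos _).ne'
      fun_prop (disch := assumption)) r hr
  refine ⟨_, key, ?_⟩
  rw [KK, ← intervalIntegral.integral_const_mul]
  apply intervalIntegral.integral_congr
  intro θ _
  simp only [zz, Complex.mul_re, Complex.mul_im, Complex.ofReal_re, Complex.ofReal_im]
  ring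

theorem chi_ineq (h1 : ∀ z ∈ Metric.ball (0:ℂ) 1, HasDerivAt ζ (E z) z)
    (cE : ContinuousOn E (Metric.ball (0:ℂ) 1)) (r : ℝ) (hr : r ∈ Set.Ioo (-1:ℝ) 1)
    (k : ℝ) (hk : KK ζ E r = 4 * Real.pi * k) (σ : ℝ) (hσ : σ = 1 ∨ σ = -1) :
    ∫ θ in (0:ℝ)..(2 * Real.pi), (1 + σ * Real.tanh (tz ζ r θ).re) *
        ((1/2) * (zz r θ * tz E r θ).re * (σ - Real.tanh (tz ζ r θ).re) + k) ≤
    ∫ θ in (0:ℝ)..(2 * Real.pi), (1 + σ * Real.tanh (tz ζ r θ).re) *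
        ((1/4) * (r ^ 2 * ‖tz E r θ‖ ^ 2) * (σ - Real.tanh (tz ζ r θ).re) ^ 2
          + (zz r θ * tz E r θ).re * (σ - Real.tanh (tz ζ r θ).re) * k + k ^ 2) := by
  have cζ : ContinuousOn ζ (Metric.ball (0:ℂ) 1) := fun z hz => (h1 z hz).continuousAt.continuousWithinAt
  have c1 := zz_cont cζ hr
  have c2 := zz_cont cE hr
  have cτ : Continuous (fun θ => (1/2) * (Real.tanh (tz ζ r θ).re * (zz r θ * tz E r θ).re) - k) := by
    fun_prop
  set τ : ℝ → ℝ := fun x => ∫ θ in (0:ℝ)..x,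
    ((1/2) * (Real.tanh (tz ζ r θ).re * (zz r θ * tz E r θ).re) - k) with hτ
  have dτ : ∀ θ, HasDerivAt τ
      ((1/2) * (Real.tanh (tz ζ r θ).re * (zz r θ * tz E r θ).re) - k) θ := fun θ =>
    (cτ.integral_hasStrictDerivAt 0 θ).hasDerivAt
  have τ0 : τ 0 = 0 := by simp [hτ]
  have τ1 : τ (2 * Real.pi) = 0 := by
    rw [hτ]
    simp only
    rw [intervalIntegral.integral_sub (Continuous.intervalIntegrable (by fun_prop) _ _)
      (by simp), intervalIntegral.integral_const_mul, intervalIntegral.integral_const]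
    rw [KK] at hk
    rw [hk]
    simp only [sub_zero, smul_eq_mul]
    ring
  set A : ℝ → ℂ := fun θ => (σ / 2 : ℂ) * tz ζ r θ
    - ((1 / 2 * Real.log (Real.cosh (tz ζ r θ).re) : ℝ) : ℂ) - Complex.I * (τ θ : ℂ) with hA
  set A' : ℝ → ℂ := fun θ => (σ / 2 : ℂ) * (tz E r θ * (Complex.I * zz r θ))
    - ((1 / 2 * (Real.tanh (tz ζ r θ).re * (tz E r θ * (Complex.I * zz r θ)).re) : ℝ) : ℂ)
    - Complex.I * (((1/2) * (Real.tanh (tz ζ r θ).re * (zz r θ * tz E r θ).re) - k : ℝ) : ℂ) with hA'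
  have dA : ∀ θ, HasDerivAt A (A' θ) θ := by
    intro θ
    have a0 := comp_dth (h1 _ (zz_mem hr θ))
    have a1 := hasDerivAt_re a0
    have a2 := (((Real.hasDerivAt_cosh _).comp θ a1).log (Real.cosh_pos _).ne').const_mul (1/2:ℝ)
    have a3 := (a0.const_mul (σ / 2 : ℂ)).sub a2.ofReal_comp
    have a4 := a3.sub ((dτ θ).ofReal_comp.const_mul Complex.I)
    refine a4.congr_deriv ?_
    simp only [hA', Real.tanh_eq_sinh_div_cosh, Function.comp, tz]
    congr 3
    ring_nf
  have cA' : Continuous A' := by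
    rw [hA']; fun_prop
  have cA : Continuous A := continuous_iff_continuousAt.2 fun θ => (dA θ).continuousAt
  have W := wirt (fun θ => Complex.exp (A θ)) (fun θ => Complex.exp (A θ) * A' θ)
    (fun θ => (dA θ).cexp) (by fun_prop) (by
      simp only [hA, τ0, τ1]
      simp only [tz, zz_per])
  have nrm : ∀ θ, ‖Complex.exp (A θ)‖ ^ 2 = 1 + σ * Real.tanh (tz ζ r θ).re := by
    intro θ
    have hre : (A θ).re = σ / 2 * (tz ζ r θ).re - 1 / 2 * Real.log (Real.cosh (tz ζ r θ).re) := by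
      simp only [hA, Complex.sub_re, Complex.ofReal_re, Complex.mul_re, Complex.I_re, Complex.I_im,
        Complex.ofReal_im]
      have e1 : ((σ : ℂ) / 2).re = σ / 2 := by
        have : (σ : ℂ) / 2 = ((σ / 2 : ℝ) : ℂ) := by push_cast; rfl
        rw [this, Complex.ofReal_re]
      have e2 : ((σ : ℂ) / 2).im = 0 := by
        have : (σ : ℂ) / 2 = ((σ / 2 : ℝ) : ℂ) := by push_cast; rfl
        rw [this, Complex.ofReal_im]
      rw [e1, e2]; ring
    rw [Complex.norm_exp, ← Real.exp_nat_mul, hre]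
    have : ((2:ℕ):ℝ) * (σ / 2 * (tz ζ r θ).re - 1 / 2 * Real.log (Real.cosh (tz ζ r θ).re))
      = σ * (tz ζ r θ).re - Real.log (Real.cosh (tz ζ r θ).re) := by push_cast; ring
    rw [this, Real.exp_sub, Real.exp_log (Real.cosh_pos _), Real.tanh_eq_sinh_div_cosh]
    have hc := (Real.cosh_pos (tz ζ r θ).re).ne'
    rcases hσ with rfl | rfl
    · rw [one_mul, ← Real.cosh_add_sinh]; field_simp
    · rw [neg_one_mul, ← Real.cosh_sub_sinh]; field_simp; ring
  have ids : ∀ θ, A' θ = ⟨-(1/2) * (zz r θ * tz E r θ).im * (σ - Real.tanh (tz ζ r θ).re),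
      (1/2) * (zz r θ * tz E r θ).re * (σ - Real.tanh (tz ζ r θ).re) + k⟩ := by
    intro θ
    have e1 : ((σ : ℂ) / 2).re = σ / 2 := by
      have : (σ : ℂ) / 2 = ((σ / 2 : ℝ) : ℂ) := by push_cast; rfl
      rw [this, Complex.ofReal_re]
    have e2 : ((σ : ℂ) / 2).im = 0 := by
      have : (σ : ℂ) / 2 = ((σ / 2 : ℝ) : ℂ) := by push_cast; rfl
      rw [this, Complex.ofReal_im]
    apply Complex.ext
    · simp only [hA', Complex.sub_re, Complex.ofReal_re, Complex.mul_re, Complex.I_re, Complex.I_im,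
        Complex.ofReal_im, Complex.mul_im, e1, e2]
      ring
    · simp only [hA', Complex.sub_im, Complex.ofReal_re, Complex.mul_re, Complex.I_re, Complex.I_im,
        Complex.ofReal_im, Complex.mul_im, e1, e2]
      ring
  have nE : ∀ θ, r ^ 2 * ‖tz E r θ‖ ^ 2 = (zz r θ * tz E r θ).re ^ 2 + (zz r θ * tz E r θ).im ^ 2 := by
    intro θ
    have : r ^ 2 * ‖tz E r θ‖ ^ 2 = ‖zz r θ * tz E r θ‖ ^ 2 := by
      rw [norm_mul, norm_zz, mul_pow, sq_abs]
    rw [this, ← Complex.normSq_eq_norm_sq, Complex.normSq_apply]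
    ring
  calc _ = ∫ θ in (0:ℝ)..(2 * Real.pi), ((starRingEnd ℂ) (Complex.exp (A θ)) *
            (Complex.exp (A θ) * A' θ)).im := by
        apply intervalIntegral.integral_congr
        intro θ _
        simp only
        rw [← mul_assoc, mul_comm ((starRingEnd ℂ) _), Complex.mul_conj, Complex.normSq_eq_norm_sq,
          nrm, Complex.im_ofReal_mul, ids]
    _ ≤ _ := W
    _ = _ := by
        apply intervalIntegral.integral_congr
        intro θ _
        simp only
        rw [norm_mul, mul_pow, nrm, nE, ← Complex.normSq_eq_norm_sq (A' θ), Complex.normSq_apply, ids]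
        ring

theorem ode_ineq (h1 : ∀ z ∈ Metric.ball (0:ℂ) 1, HasDerivAt ζ (E z) z)
    (cE : ContinuousOn E (Metric.ball (0:ℂ) 1)) (r : ℝ) (hr : r ∈ Set.Ioo (-1:ℝ) 1)
    (k : ℝ) (hk : KK ζ E r = 4 * Real.pi * k) :
    8 * Real.pi * (k * (1 - k)) ≤ r ^ 2 * NN ζ E r := by
  have cζ : ContinuousOn ζ (Metric.ball (0:ℂ) 1) := fun z hz => (h1 z hz).continuousAt.continuousWithinAt
  have c1 := zz_cont cζ hr
  have c2 := zz_cont cE hr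
  have A := chi_ineq h1 cE r hr k hk 1 (Or.inl rfl)
  have B := chi_ineq h1 cE r hr k hk (-1) (Or.inr rfl)
  have C := add_le_add A B
  rw [← intervalIntegral.integral_add (Continuous.intervalIntegrable (by fun_prop) _ _)
    (Continuous.intervalIntegrable (by fun_prop) _ _),
    ← intervalIntegral.integral_add (Continuous.intervalIntegrable (by fun_prop) _ _)
    (Continuous.intervalIntegrable (by fun_prop) _ _)] at C
  have e1 : ∫ θ in (0:ℝ)..(2 * Real.pi), ((1 + 1 * Real.tanh (tz ζ r θ).re) *
        ((1/2) * (zz r θ * tz E r θ).re * (1 - Real.tanh (tz ζ r θ).re) + k) +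
        (1 + -1 * Real.tanh (tz ζ r θ).re) *
        ((1/2) * (zz r θ * tz E r θ).re * (-1 - Real.tanh (tz ζ r θ).re) + k)) = 4 * Real.pi * k := by
    have : ∀ θ, ((1 + 1 * Real.tanh (tz ζ r θ).re) *
        ((1/2) * (zz r θ * tz E r θ).re * (1 - Real.tanh (tz ζ r θ).re) + k) +
        (1 + -1 * Real.tanh (tz ζ r θ).re) *
        ((1/2) * (zz r θ * tz E r θ).re * (-1 - Real.tanh (tz ζ r θ).re) + k)) = 2 * k := by
      intro θ; ring
    simp only [this, intervalIntegral.integral_const, smul_eq_mul]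
    ring
  have e2 : ∫ θ in (0:ℝ)..(2 * Real.pi), ((1 + 1 * Real.tanh (tz ζ r θ).re) *
        ((1/4) * (r ^ 2 * ‖tz E r θ‖ ^ 2) * (1 - Real.tanh (tz ζ r θ).re) ^ 2
          + (zz r θ * tz E r θ).re * (1 - Real.tanh (tz ζ r θ).re) * k + k ^ 2) +
          (1 + -1 * Real.tanh (tz ζ r θ).re) *
        ((1/4) * (r ^ 2 * ‖tz E r θ‖ ^ 2) * (-1 - Real.tanh (tz ζ r θ).re) ^ 2
          + (zz r θ * tz E r θ).re * (-1 - Real.tanh (tz ζ r θ).re) * k + k ^ 2))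
        = r ^ 2 / 2 * NN ζ E r + 4 * Real.pi * k ^ 2 := by
    have : ∀ θ, ((1 + 1 * Real.tanh (tz ζ r θ).re) *
        ((1/4) * (r ^ 2 * ‖tz E r θ‖ ^ 2) * (1 - Real.tanh (tz ζ r θ).re) ^ 2
          + (zz r θ * tz E r θ).re * (1 - Real.tanh (tz ζ r θ).re) * k + k ^ 2) +
          (1 + -1 * Real.tanh (tz ζ r θ).re) *
        ((1/4) * (r ^ 2 * ‖tz E r θ‖ ^ 2) * (-1 - Real.tanh (tz ζ r θ).re) ^ 2
          + (zz r θ * tz E r θ).re * (-1 - Real.tanh (tz ζ r θ).re) * k + k ^ 2))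
        = r ^ 2 / 2 * ((1 - Real.tanh (tz ζ r θ).re ^ 2) * ‖tz E r θ‖ ^ 2) + 2 * k ^ 2 := by
      intro θ; ring
    simp only [this]
    rw [intervalIntegral.integral_add (Continuous.intervalIntegrable (by fun_prop) _ _) (by simp),
      intervalIntegral.integral_const_mul, intervalIntegral.integral_const, NN]
    simp only [smul_eq_mul]
    ring
  rw [e1, e2] at C
  nlinarith [C]

theorem thmB1 (h1 : ∀ z ∈ Metric.ball (0:ℂ) 1, HasDerivAt ζ (E z) z)
    (h2 : ∀ z ∈ Metric.ball (0:ℂ) 1, HasDerivAt E (E' z) z)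
    (h3 : ContinuousOn E' (Metric.ball (0:ℂ) 1)) (hz : (ζ 0).re = 0)
    (hκ : ∀ r ∈ Set.Ioo (0:ℝ) 1, KK ζ E r ≤ 2 * Real.pi) : ‖E 0‖ ≤ 2 := by
  by_contra hcon
  push Not at hcon
  have hpi := Real.pi_pos
  have cζ : ContinuousOn ζ (Metric.ball (0:ℂ) 1) := fun z hz => (h1 z hz).continuousAt.continuousWithinAt
  have cE : ContinuousOn E (Metric.ball (0:ℂ) 1) := fun z hz => (h2 z hz).continuousAt.continuousWithinAt
  have m0 : (0:ℂ) ∈ Metric.ball (0:ℂ) 1 := by simp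
  have tle : ∀ x : ℝ, 0 ≤ 1 - Real.tanh x ^ 2 := by
    intro x
    have h := Real.cosh_sq x
    have hc := Real.cosh_pos x
    rw [Real.tanh_eq_sinh_div_cosh, div_pow, sub_nonneg, div_le_one (by positivity)]
    linarith
  have hK : ∀ r ∈ Set.Ioo (-1:ℝ) 1, HasDerivAt (KK ζ E) (r * NN ζ E r) r := KK_deriv h1 h2 h3
  have hN0 : ∀ r, 0 ≤ NN ζ E r := by
    intro r
    apply intervalIntegral.integral_nonneg (by positivity)
    intro θ _
    exact mul_nonneg (tle _) (by positivity)
  have hK0 : KK ζ E 0 = 0 := by simp [KK, zz]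
  obtain ⟨δ, hδ0, hδ1, hδ⟩ : ∃ δ > 0, δ < 1 ∧ ∀ z : ℂ, ‖z‖ < δ →
      (‖E 0‖ ^ 2 + 4) / 2 ≤ (1 - Real.tanh (ζ z).re ^ 2) * ‖E z‖ ^ 2 := by
    have cont : ContinuousAt (fun z => (1 - Real.tanh (ζ z).re ^ 2) * ‖E z‖ ^ 2) 0 := by
      have a := (h1 0 m0).continuousAt
      have b := (h2 0 m0).continuousAt
      have c : ContinuousAt (fun z => Real.tanh (ζ z).re) 0 :=
        (continuous_tanh'.comp Complex.continuous_re).continuousAt.comp (f := ζ) a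
      exact (continuousAt_const.sub (c.pow 2)).mul (b.norm.pow 2)
    have hev := cont.eventually_const_lt (u := (‖E 0‖ ^ 2 + 4) / 2) (by
      simp only [hz, Real.tanh_zero]
      nlinarith)
    obtain ⟨ε, hε, hh⟩ := Metric.eventually_nhds_iff.1 hev
    refine ⟨min ε (1/2), by positivity, lt_of_le_of_lt (min_le_right _ _) (by norm_num), ?_⟩
    intro z hz
    exact (hh (by rw [dist_zero_right]; exact lt_of_lt_of_le hz (min_le_left _ _))).le
  set η := (‖E 0‖ ^ 2 + 4) / 2 with hη
  have hη4 : 4 < η := by nlinarith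
  have hNlow : ∀ r, 0 ≤ r → r < δ → 2 * Real.pi * η ≤ NN ζ E r := by
    intro r hr0 hr
    have hr' : r ∈ Set.Ioo (-1:ℝ) 1 := ⟨by linarith, by linarith⟩
    have c1 := zz_cont cζ hr'
    have c2 := zz_cont cE hr'
    have : ∫ θ in (0:ℝ)..(2 * Real.pi), η ≤ NN ζ E r := by
      apply intervalIntegral.integral_mono_on (by positivity) (by simp)
        (Continuous.intervalIntegrable (by fun_prop) _ _)
      intro θ _
      exact hδ _ (by rw [norm_zz, abs_of_nonneg hr0]; exact hr)
    simpa using this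
  have mono1 : MonotoneOn (fun r => KK ζ E r - Real.pi * η * r ^ 2) (Set.Ico 0 δ) := by
    have hd : ∀ r ∈ Set.Ico 0 δ, HasDerivAt (fun r => KK ζ E r - Real.pi * η * r ^ 2)
        (r * NN ζ E r - Real.pi * η * (2 * r)) r := by
      intro r hr
      have := (hK r ⟨by linarith [hr.1], by linarith [hr.2]⟩).sub
        ((hasDerivAt_pow 2 r).const_mul (Real.pi * η))
      refine this.congr_deriv ?_
      simp
    apply monotoneOn_of_deriv_nonneg (convex_Ico _ _)
    · exact fun r hr => (hd r hr).continuousAt.continuousWithinAt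
    · exact fun r hr => (hd r (interior_subset hr)).differentiableAt.differentiableWithinAt
    · intro r hr
      have hr' := interior_subset hr
      rw [(hd r hr').deriv]
      nlinarith [hNlow r hr'.1 hr'.2, hr'.1]
  have mono2 : MonotoneOn (KK ζ E) (Set.Ico 0 1) := by
    have hd : ∀ r ∈ Set.Ico (0:ℝ) 1, HasDerivAt (KK ζ E) (r * NN ζ E r) r := fun r hr =>
      hK r ⟨by linarith [hr.1], hr.2⟩
    apply monotoneOn_of_deriv_nonneg (convex_Ico _ _)
    · exact fun r hr => (hd r hr).continuousAt.continuousWithinAt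
    · exact fun r hr => (hd r (interior_subset hr)).differentiableAt.differentiableWithinAt
    · intro r hr
      have hr' := interior_subset hr
      rw [(hd r hr').deriv]
      exact mul_nonneg hr'.1 (hN0 r)
  set r0 := δ / 2 with hr0
  have r0pos : 0 < r0 := by positivity
  have r0lt : r0 < 1 := by linarith
  have Kr0 : Real.pi * η * r0 ^ 2 ≤ KK ζ E r0 := by
    have := mono1 (a := 0) ⟨le_rfl, hδ0⟩ (b := r0) ⟨r0pos.le, by linarith⟩ r0pos.le
    simp only [hK0] at this
    linarith
  set κ : ℝ → ℝ := fun r => KK ζ E r / (4 * Real.pi) with hκdef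
  have κr0 : r0 ^ 2 < κ r0 := by
    rw [hκdef]
    simp only
    rw [lt_div_iff₀ (by positivity)]
    have : 0 < r0 ^ 2 * Real.pi := by positivity
    nlinarith
  have κpos : ∀ r ∈ Set.Ico r0 1, 0 < κ r := by
    intro r hr
    have a : KK ζ E r0 ≤ KK ζ E r := mono2 ⟨r0pos.le, r0lt⟩ ⟨by linarith [hr.1], hr.2⟩ hr.1
    have : κ r0 ≤ κ r := by
      simp only [hκdef]; gcongr
    have : 0 < r0 ^ 2 := by positivity
    linarith
  have κhalf : ∀ r ∈ Set.Ico r0 1, κ r ≤ 1 / 2 := by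
    intro r hr
    simp only [hκdef]
    rw [div_le_iff₀ (by positivity)]
    linarith [hκ r ⟨by linarith [hr.1], hr.2⟩]
  set V : ℝ → ℝ := fun r => Real.log (κ r) - Real.log (1 - κ r) - 2 * Real.log r with hV
  have mono3 : MonotoneOn V (Set.Ico r0 1) := by
    have hd : ∀ r ∈ Set.Ico r0 1, HasDerivAt V
        ((r * NN ζ E r / (4 * Real.pi)) / κ r - (-(r * NN ζ E r / (4 * Real.pi))) / (1 - κ r)
          - 2 * r⁻¹) r := by
      intro r hr
      have a := (hK r ⟨by linarith [hr.1], hr.2⟩).div_const (4 * Real.pi)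
      have b := a.log (κpos r hr).ne'
      have c := (a.const_sub 1).log (by linarith [κhalf r hr] : (0:ℝ) < 1 - κ r).ne'
      exact (b.sub c).sub ((Real.hasDerivAt_log (by linarith [hr.1] : r ≠ 0 )).const_mul 2)
    apply monotoneOn_of_deriv_nonneg (convex_Ico _ _)
    · exact fun r hr => (hd r hr).continuousAt.continuousWithinAt
    · exact fun r hr => (hd r (interior_subset hr)).differentiableAt.differentiableWithinAt
    · intro r hr
      have hr' := interior_subset hr
      rw [(hd r hr').deriv]
      have k0 := κpos r hr'
      have k1 : 0 < 1 - κ r := by linarith [κhalf r hr']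
      have rp : 0 < r := by linarith [hr'.1]
      have O := ode_ineq h1 cE r ⟨by linarith, hr'.2⟩ (κ r) (by simp only [hκdef]; field_simp)
      have e : (r * NN ζ E r / (4 * Real.pi)) / κ r - (-(r * NN ζ E r / (4 * Real.pi))) / (1 - κ r)
          - 2 * r⁻¹ = (r ^ 2 * NN ζ E r - 8 * Real.pi * (κ r * (1 - κ r)))
            / (4 * Real.pi * r * (κ r * (1 - κ r))) := by
        field_simp
        ring
      rw [e]
      apply div_nonneg (by linarith) (by positivity)
  have Vr0 : 0 < V r0 := by
    simp only [hV]
    have k1 : 0 < 1 - κ r0 := by linarith [κhalf r0 ⟨le_rfl, r0lt⟩]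
    have a : Real.log (1 - κ r0) ≤ 0 := Real.log_nonpos k1.le (by linarith [κpos r0 ⟨le_rfl, r0lt⟩])
    have b : Real.log (r0 ^ 2) < Real.log (κ r0) := Real.log_lt_log (by positivity) κr0
    rw [Real.log_pow] at b
    push_cast at b
    linarith
  set r := max r0 (Real.exp (-(V r0 / 4))) with hr
  have rlt : r < 1 := max_lt r0lt (by rw [Real.exp_lt_one_iff]; linarith)
  have rm : r ∈ Set.Ico r0 1 := ⟨le_max_left _ _, rlt⟩
  have c1 := mono3 ⟨le_rfl, r0lt⟩ rm rm.1
  have c2 : V r ≤ -2 * Real.log r := by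
    simp only [hV]
    have : Real.log (κ r) ≤ Real.log (1 - κ r) :=
      Real.log_le_log (κpos r rm) (by linarith [κhalf r rm])
    linarith
  have c3 : -(V r0 / 4) ≤ Real.log r := by
    rw [← Real.log_exp (-(V r0 / 4))]
    exact Real.log_le_log (Real.exp_pos _) (le_max_right _ _)
  linarith

theorem max_formula (K x : ℝ) (hx : x ∈ Set.Icc (-K) K) :
    ∫ t in (-K)..K, (1 - Real.tanh t ^ 2) * max x t =
      Real.log (Real.cosh x) + x * Real.tanh K + K * Real.tanh K - Real.log (Real.cosh K) := by
  have c : Continuous fun t => (1 - Real.tanh t ^ 2) * max x t := by fun_prop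
  rw [← intervalIntegral.integral_add_adjacent_intervals (c.intervalIntegrable (-K) x)
    (c.intervalIntegrable x K)]
  have e1 : ∫ t in (-K)..x, (1 - Real.tanh t ^ 2) * max x t
      = ∫ t in (-K)..x, (1 - Real.tanh t ^ 2) * x := by
    apply intervalIntegral.integral_congr
    intro t ht
    rw [Set.uIcc_of_le hx.1] at ht
    simp [max_eq_left ht.2]
  have e2 : ∫ t in x..K, (1 - Real.tanh t ^ 2) * max x t
      = ∫ t in x..K, (1 - Real.tanh t ^ 2) * t := by
    apply intervalIntegral.integral_congr
    intro t ht
    rw [Set.uIcc_of_le hx.2] at ht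
    simp [max_eq_right ht.1]
  rw [e1, e2, intervalIntegral.integral_eq_sub_of_hasDerivAt (f := fun t => Real.tanh t * x)
    (fun t _ => (hasDerivAt_tanh' t).mul_const x) (Continuous.intervalIntegrable (by fun_prop) _ _)]
  rw [intervalIntegral.integral_eq_sub_of_hasDerivAt
    (f := fun t => Real.tanh t * t - Real.log (Real.cosh t))
    (fun t _ => ?_) (Continuous.intervalIntegrable (by fun_prop) _ _)]
  · rw [Real.tanh_neg]; ring
  · have := ((hasDerivAt_tanh' t).mul (hasDerivAt_id t)).sub
      ((Real.hasDerivAt_cosh t).log (Real.cosh_pos t).ne')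
    refine this.congr_deriv ?_
    rw [← Real.tanh_eq_sinh_div_cosh]
    simp

theorem thmB2 (h1 : ∀ z ∈ Metric.ball (0:ℂ) 1, HasDerivAt ζ (E z) z)
    (cE : ContinuousOn E (Metric.ball (0:ℂ) 1))
    (hm : ∃ c : ℝ, ∀ r ∈ Set.Ioo (0:ℝ) 1, ∫ θ in (0:ℝ)..(2 * Real.pi), (tz ζ r θ).re = c)
    (hH : ∀ t r₁ r₂ : ℝ, 0 < r₁ → r₁ < r₂ → r₂ < 1 →
      (∫ θ in (0:ℝ)..(2 * Real.pi), max (tz ζ r₂ θ).re t) -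
      (∫ θ in (0:ℝ)..(2 * Real.pi), max (tz ζ r₁ θ).re t) ≤ Real.pi * Real.log (r₂ / r₁)) :
    ∀ r ∈ Set.Ioo (0:ℝ) 1, KK ζ E r ≤ 2 * Real.pi := by
  have hpi := Real.pi_pos
  have cζ : ContinuousOn ζ (Metric.ball (0:ℂ) 1) := fun z hz => (h1 z hz).continuousAt.continuousWithinAt
  have tle : ∀ x : ℝ, 0 ≤ 1 - Real.tanh x ^ 2 := by
    intro x
    have h := Real.cosh_sq x
    have hc := Real.cosh_pos x
    rw [Real.tanh_eq_sinh_div_cosh, div_pow, sub_nonneg, div_le_one (by positivity)]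
    linarith
  obtain ⟨c, hm⟩ := hm
  have MMf : ∀ r ∈ Set.Ioo (0:ℝ) 1, ∀ K, (∀ θ ∈ Set.Icc 0 (2 * Real.pi), |(tz ζ r θ).re| ≤ K) →
      MM ζ r = (∫ t in (-K)..K, (1 - Real.tanh t ^ 2) *
        (∫ θ in (0:ℝ)..(2 * Real.pi), max (tz ζ r θ).re t))
        - c * Real.tanh K - 2 * Real.pi * (K * Real.tanh K - Real.log (Real.cosh K)) := by
    intro r hr K hK
    have hr' : r ∈ Set.Ioo (-1:ℝ) 1 := ⟨by linarith [hr.1], hr.2⟩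
    have c1 := zz_cont cζ hr'
    have cl : Continuous fun θ => Real.log (Real.cosh (tz ζ r θ).re) := by
      have : ∀ θ, Real.cosh (tz ζ r θ).re ≠ 0 := fun θ => (Real.cosh_pos _).ne'
      fun_prop (disch := assumption)
    have sw : ∫ t in (-K)..K, (1 - Real.tanh t ^ 2) *
        (∫ θ in (0:ℝ)..(2 * Real.pi), max (tz ζ r θ).re t) =
        ∫ θ in (0:ℝ)..(2 * Real.pi), ∫ t in (-K)..K, (1 - Real.tanh t ^ 2) * max (tz ζ r θ).re t := by
      simp only [← intervalIntegral.integral_const_mul]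
      apply MeasureTheory.intervalIntegral_intervalIntegral_swap
      have : Continuous (Function.uncurry fun t θ : ℝ => (1 - Real.tanh t ^ 2) * max (tz ζ r θ).re t) := by
        unfold Function.uncurry
        fun_prop
      refine (this.continuousOn.integrableOn_compact (isCompact_uIcc.prod isCompact_uIcc)).mono_set
        (Set.prod_mono Set.uIoc_subset_uIcc Set.uIoc_subset_uIcc)
    rw [sw]
    have : ∫ θ in (0:ℝ)..(2 * Real.pi), ∫ t in (-K)..K, (1 - Real.tanh t ^ 2) * max (tz ζ r θ).re t
      = ∫ θ in (0:ℝ)..(2 * Real.pi), (Real.log (Real.cosh (tz ζ r θ).re) +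
         ((tz ζ r θ).re * Real.tanh K + (K * Real.tanh K - Real.log (Real.cosh K)))) := by
      apply intervalIntegral.integral_congr
      intro θ hθ
      rw [Set.uIcc_of_le (by positivity)] at hθ
      have := abs_le.1 (hK θ hθ)
      simp only
      rw [max_formula K _ ⟨this.1, this.2⟩]
      ring
    rw [this, intervalIntegral.integral_add (cl.intervalIntegrable _ _)
      (Continuous.intervalIntegrable (by fun_prop) _ _),
      intervalIntegral.integral_add (Continuous.intervalIntegrable (by fun_prop) _ _) (by simp),
      intervalIntegral.integral_mul_const, hm r hr, intervalIntegral.integral_const, MM]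
    simp only [smul_eq_mul]
    ring
  have anti : AntitoneOn (fun r => MM ζ r - 2 * Real.pi * Real.log r) (Set.Ioo 0 1) := by
    intro r₁ hr₁ r₂ hr₂ h12
    rcases h12.eq_or_lt with rfl | h12
    · exact le_rfl
    have hr₁' : r₁ ∈ Set.Ioo (-1:ℝ) 1 := ⟨by linarith [hr₁.1], hr₁.2⟩
    have hr₂' : r₂ ∈ Set.Ioo (-1:ℝ) 1 := ⟨by linarith [hr₂.1], hr₂.2⟩
    have c1 := zz_cont cζ hr₁'
    have c2 := zz_cont cζ hr₂'
    obtain ⟨K1, hK1⟩ := (isCompact_Icc (a := (0:ℝ)) (b := 2 * Real.pi)).exists_bound_of_continuousOn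
      (f := fun θ => (tz ζ r₁ θ).re) (by fun_prop)
    obtain ⟨K2, hK2⟩ := (isCompact_Icc (a := (0:ℝ)) (b := 2 * Real.pi)).exists_bound_of_continuousOn
      (f := fun θ => (tz ζ r₂ θ).re) (by fun_prop)
    set K := max K1 K2
    have b1 := MMf r₁ hr₁ K (fun θ hθ => (hK1 θ hθ).trans (le_max_left _ _))
    have b2 := MMf r₂ hr₂ K (fun θ hθ => (hK2 θ hθ).trans (le_max_right _ _))
    have K0 : 0 ≤ K := by
      have := (norm_nonneg _).trans (hK1 0 ⟨le_rfl, by positivity⟩)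
      exact this.trans (le_max_left _ _)
    have cc : ∀ r ∈ Set.Ioo (-1:ℝ) 1, Continuous (fun t : ℝ => (1 - Real.tanh t ^ 2) *
        (∫ θ in (0:ℝ)..(2 * Real.pi), max (tz ζ r θ).re t)) := by
      intro r hr
      have c1 := zz_cont cζ hr
      have : Continuous (fun t : ℝ => ∫ θ in (0:ℝ)..(2 * Real.pi), max (tz ζ r θ).re t) := by
        apply intervalIntegral.continuous_parametric_intervalIntegral_of_continuous'
        unfold Function.uncurry
        fun_prop
      fun_prop
    have L : 0 ≤ Real.log (r₂ / r₁) := Real.log_nonneg (by rw [le_div_iff₀ hr₁.1]; linarith)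
    have d : (∫ t in (-K)..K, (1 - Real.tanh t ^ 2) *
        (∫ θ in (0:ℝ)..(2 * Real.pi), max (tz ζ r₂ θ).re t)) - (∫ t in (-K)..K, (1 - Real.tanh t ^ 2) *
        (∫ θ in (0:ℝ)..(2 * Real.pi), max (tz ζ r₁ θ).re t)) ≤ 2 * Real.pi * Real.log (r₂ / r₁) := by
      rw [← intervalIntegral.integral_sub ((cc r₂ hr₂').intervalIntegrable _ _)
        ((cc r₁ hr₁').intervalIntegrable _ _)]
      have : ∫ t in (-K)..K, ((1 - Real.tanh t ^ 2) *
        (∫ θ in (0:ℝ)..(2 * Real.pi), max (tz ζ r₂ θ).re t) - (1 - Real.tanh t ^ 2) *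
        (∫ θ in (0:ℝ)..(2 * Real.pi), max (tz ζ r₁ θ).re t)) ≤
         ∫ t in (-K)..K, (1 - Real.tanh t ^ 2) * (Real.pi * Real.log (r₂ / r₁)) := by
        apply intervalIntegral.integral_mono_on (by linarith)
          (((cc r₂ hr₂').sub (cc r₁ hr₁')).intervalIntegrable _ _)
          (Continuous.intervalIntegrable (by fun_prop) _ _)
        intro t _
        rw [Pi.sub_apply, ← mul_sub]
        exact mul_le_mul_of_nonneg_left (hH t r₁ r₂ hr₁.1 h12 hr₂.2) (tle t)
      refine this.trans ?_
      rw [intervalIntegral.integral_mul_const, intervalIntegral.integral_eq_sub_of_hasDerivAt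
        (f := Real.tanh) (fun t _ => hasDerivAt_tanh' t) (Continuous.intervalIntegrable (by fun_prop) _ _)]
      rw [Real.tanh_neg]
      have : Real.tanh K ≤ 1 := by
        nlinarith [tle K]
      nlinarith [mul_nonneg hpi.le L]
    rw [Real.log_div (by linarith [hr₂.1]) (by linarith [hr₁.1])] at d
    simp only
    rw [b1, b2]
    linarith
  intro r hr
  obtain ⟨D, hD, hrD⟩ := MM_deriv h1 cE r ⟨by linarith [hr.1], hr.2⟩
  have a := (hD.sub ((Real.hasDerivAt_log hr.1.ne').const_mul (2 * Real.pi))).hasDerivWithinAt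
    (s := Set.Ioo 0 1)
  have b := a.derivWithin (isOpen_Ioo.uniqueDiffWithinAt hr)
  have e := anti.derivWithin_nonpos (x := r)
  have e' : derivWithin (MM ζ - fun r => 2 * Real.pi * Real.log r) (Set.Ioo 0 1) r ≤ 0 := e
  rw [b] at e'
  have f : r * (D - 2 * Real.pi * r⁻¹) ≤ 0 := mul_nonpos_of_nonneg_of_nonpos hr.1.le e'
  rw [mul_sub, hrD] at f
  have : r * (2 * Real.pi * r⁻¹) = 2 * Real.pi := by
    have := hr.1.ne'
    field_simp
  linarith

end ode

theorem prod_differentiable (S : Multiset ℂ) :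
    Differentiable ℂ (fun z : ℂ => (S.map (fun u => z - u)).prod) := by
  induction S using Multiset.induction_on with
  | empty => simp
  | cons a S ih =>
    simp only [Multiset.map_cons, Multiset.prod_cons]
    exact (differentiable_id.sub_const a).mul ih

theorem jensen_mult (h : ℂ → ℂ) (hh : DifferentiableOn ℂ h (Metric.ball (0:ℂ) 1))
    (h0 : ∀ z ∈ Metric.ball (0:ℂ) 1, h z ≠ 0) (r : ℝ) (hr : 0 < r) (hr1 : r < 1) (S : Multiset ℂ) :
    Real.circleAverage (fun z => Real.log ‖(S.map (fun u => z - u)).prod * h z‖) 0 r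
      = (S.map (fun u => Real.log r + Real.posLog (r⁻¹ * ‖0 - u‖))).sum + Real.log ‖h 0‖ := by
  have han : AnalyticOnNhd ℂ h (Metric.ball (0:ℂ) 1) := hh.analyticOnNhd Metric.isOpen_ball
  have hsub : Metric.closedBall (0:ℂ) |r| ⊆ Metric.ball (0:ℂ) 1 := by
    rw [abs_of_pos hr]; exact Metric.closedBall_subset_ball hr1
  have hsph : Metric.sphere (0:ℂ) |r| ⊆ Metric.ball (0:ℂ) 1 :=
    Metric.sphere_subset_closedBall.trans hsub
  induction S using Multiset.induction_on with
  | empty =>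
    simp only [Multiset.map_zero, Multiset.prod_zero, one_mul, Multiset.sum_zero, zero_add]
    exact AnalyticOnNhd.circleAverage_log_norm_of_ne_zero (han.mono hsub) (fun u hu => h0 u (hsub hu))
  | cons a S ih =>
    have hG : MeromorphicOn (fun z => (S.map (fun u => z - u)).prod * h z) (Metric.sphere (0:ℂ) |r|) := by
      intro z hz
      have : AnalyticAt ℂ (fun z => (S.map (fun u => z - u)).prod) z := (prod_differentiable S).analyticAt z
      exact (this.mul (han z (hsph hz))).meromorphicAt
    have e : Real.circleAverage (fun z => Real.log ‖((a ::ₘ S).map (fun u => z - u)).prod * h z‖) 0 r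
       = Real.circleAverage (fun z => Real.log ‖z - a‖
          + Real.log ‖(S.map (fun u => z - u)).prod * h z‖) 0 r := by
      apply Real.circleAverage_congr_codiscreteWithin _ hr.ne'
      filter_upwards [compl_finite_mem_codiscreteWithin (s := Metric.sphere (0:ℂ) |r|) (a ::ₘ S).toFinset.finite_toSet,
        Filter.self_mem_codiscreteWithin (Metric.sphere (0:ℂ) |r|)] with z hz hz2
      simp only [Set.mem_compl_iff, Finset.mem_coe, Multiset.mem_toFinset] at hz
      simp only [Multiset.map_cons, Multiset.prod_cons]
      rw [mul_assoc, norm_mul, Real.log_mul]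
      · rw [norm_ne_zero_iff, sub_ne_zero]
        rintro rfl
        exact hz (by simp)
      · rw [norm_ne_zero_iff]
        apply mul_ne_zero _ (h0 z (hsph hz2))
        intro hp
        rw [Multiset.prod_eq_zero_iff, Multiset.mem_map] at hp
        obtain ⟨u, hu, hu2⟩ := hp
        rw [sub_eq_zero] at hu2
        subst hu2
        exact hz (by simp [hu])
    rw [e, Real.circleAverage_fun_add (circleIntegrable_log_norm_sub_const r) hG.circleIntegrable_log_norm,
      ih, circleAverage_log_norm_sub_const_eq_log_radius_add_posLog hr.ne']
    simp only [Multiset.map_cons, Multiset.sum_cons]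
    ring

theorem posLog_step (x r₁ r₂ : ℝ) (hx : 0 ≤ x) (h1 : 0 < r₁) (h12 : r₁ < r₂) :
    (Real.log r₂ + Real.posLog (r₂⁻¹ * x)) - (Real.log r₁ + Real.posLog (r₁⁻¹ * x))
      ≤ Real.log (r₂ / r₁) := by
  have h2 : 0 < r₂ := h1.trans h12
  have : Real.posLog (r₂⁻¹ * x) ≤ Real.posLog (r₁⁻¹ * x) := by
    apply Real.posLog_le_posLog (by positivity)
    gcongr
  rw [Real.log_div h2.ne' h1.ne']
  linarith

theorem circleMap_zz (r θ : ℝ) : circleMap 0 r θ = zz r θ := by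
  simp [circleMap, zz]

theorem jensen_diff (G : ℂ → ℂ) (p : ℕ) (h : ℂ → ℂ) (hh : DifferentiableOn ℂ h (Metric.ball (0:ℂ) 1))
    (h0 : ∀ z ∈ Metric.ball (0:ℂ) 1, h z ≠ 0) (S : Multiset ℂ) (hS : Multiset.card S ≤ p)
    (hG : ∀ z ∈ Metric.ball (0:ℂ) 1, G z = (S.map (fun u => z - u)).prod * h z)
    (r₁ r₂ : ℝ) (h1 : 0 < r₁) (h12 : r₁ < r₂) (h2 : r₂ < 1) :
    (∫ θ in (0:ℝ)..(2 * Real.pi), Real.log ‖G (zz r₂ θ)‖)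
     - (∫ θ in (0:ℝ)..(2 * Real.pi), Real.log ‖G (zz r₁ θ)‖) ≤ 2 * Real.pi * (p * Real.log (r₂ / r₁)) := by
  have key : ∀ r, 0 < r → r < 1 → ∫ θ in (0:ℝ)..(2 * Real.pi), Real.log ‖G (zz r θ)‖ = 2 * Real.pi *
      ((S.map (fun u => Real.log r + Real.posLog (r⁻¹ * ‖0 - u‖))).sum + Real.log ‖h 0‖) := by
    intro r hr hr1
    rw [← jensen_mult h hh h0 r hr hr1 S, Real.circleAverage, smul_eq_mul, ← mul_assoc,
      mul_inv_cancel₀ (by positivity), one_mul]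
    apply intervalIntegral.integral_congr
    intro θ _
    simp only [circleMap_zz]
    rw [hG _ (zz_mem ⟨by linarith, hr1⟩ θ)]
  rw [key r₁ h1 (h12.trans h2), key r₂ (h1.trans h12) h2, ← mul_sub]
  have L : 0 ≤ Real.log (r₂ / r₁) := Real.log_nonneg (by rw [le_div_iff₀ h1]; linarith)
  have : (S.map (fun u => Real.log r₂ + Real.posLog (r₂⁻¹ * ‖0 - u‖))).sum
      - (S.map (fun u => Real.log r₁ + Real.posLog (r₁⁻¹ * ‖0 - u‖))).sum
      ≤ (Multiset.card S : ℝ) * Real.log (r₂ / r₁) := by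
    clear hS hG key
    induction S using Multiset.induction_on with
    | empty => simp
    | cons a S ih =>
      simp only [Multiset.map_cons, Multiset.sum_cons, Multiset.card_cons]
      have := posLog_step ‖0 - a‖ r₁ r₂ (norm_nonneg _) h1 h12
      push_cast
      linarith
  have : (Multiset.card S : ℝ) * Real.log (r₂ / r₁) ≤ p * Real.log (r₂ / r₁) := by
    have : (Multiset.card S : ℝ) ≤ p := by exact_mod_cast hS
    gcongr
  have hpi := Real.pi_pos
  apply mul_le_mul_of_nonneg_left _ (by positivity)
  linarith

theorem inner_avg (w : ℂ) (hw : w ≠ 0) (s : ℝ) (hs : 0 < s) :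
    ∫ φ in (0:ℝ)..(2 * Real.pi), Real.log ‖w - zz s φ‖ = 2 * Real.pi * max (Real.log ‖w‖) (Real.log s) := by
  have h := circleAverage_log_norm_sub_const_eq_log_radius_add_posLog (R := s) (c := 0) (a := w) hs.ne'
  rw [Real.circleAverage, smul_eq_mul] at h
  have hpi := Real.pi_pos
  have e : ∫ φ in (0:ℝ)..(2 * Real.pi), Real.log ‖w - zz s φ‖
      = ∫ φ in (0:ℝ)..(2 * Real.pi), Real.log ‖circleMap 0 s φ - w‖ := by
    apply intervalIntegral.integral_congr
    intro φ _
    simp only [circleMap_zz, norm_sub_rev w]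
  rw [e]
  have e2 : max (Real.log ‖w‖) (Real.log s) = Real.log s + Real.posLog (s⁻¹ * ‖0 - w‖) := by
    have hw' : 0 < ‖w‖ := norm_pos_iff.2 hw
    rw [zero_sub, norm_neg, Real.posLog, Real.log_mul (by positivity) hw'.ne', Real.log_inv,
      ← max_add_add_left, max_comm]
    congr 1 <;> ring
  rw [e2, ← h]
  field_simp

theorem avg_integrable (γ : ℝ → ℂ) (hγ : Continuous γ) (h0 : ∀ θ, γ θ ≠ 0) (s : ℝ) (hs : 0 < s) :
    MeasureTheory.IntegrableOn (Function.uncurry fun θ φ => Real.log ‖γ θ - zz s φ‖)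
      (Set.uIoc (0:ℝ) (2 * Real.pi) ×ˢ Set.uIoc (0:ℝ) (2 * Real.pi)) := by
  have hpi := Real.pi_pos
  have hzz : Continuous (fun φ => zz s φ) := by unfold zz; fun_prop
  have hmeas : Measurable (Function.uncurry fun θ φ => Real.log ‖γ θ - zz s φ‖) := by
    apply Real.measurable_log.comp
    apply Continuous.measurable
    have h1 : Continuous fun x : ℝ × ℝ => γ x.1 := hγ.comp continuous_fst
    have h2 : Continuous fun x : ℝ × ℝ => zz s x.2 := hzz.comp continuous_snd
    exact (h1.sub h2).norm
  have hslice : ∀ θ, IntervalIntegrable (fun φ => Real.log ‖γ θ - zz s φ‖) MeasureTheory.volume 0 (2 * Real.pi) := by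
    intro θ
    have := circleIntegrable_log_norm_sub_const (a := γ θ) (c := 0) s
    unfold CircleIntegrable at this
    refine this.congr ?_
    intro φ _
    simp only [circleMap_zz, norm_sub_rev]
  obtain ⟨B, hB⟩ : ∃ B, ∀ θ ∈ Set.Icc (0:ℝ) (2 * Real.pi), ‖γ θ‖ ≤ B :=
    isCompact_Icc.exists_bound_of_continuousOn hγ.continuousOn
  have hB0 : 0 ≤ B := (norm_nonneg _).trans (hB 0 ⟨le_rfl, by positivity⟩)
  set C := B + s with hC
  have hup : ∀ θ ∈ Set.Icc (0:ℝ) (2 * Real.pi), ∀ φ, Real.log ‖γ θ - zz s φ‖ ≤ C := by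
    intro θ hθ φ
    have h1 : ‖γ θ - zz s φ‖ ≤ C := by
      refine (norm_sub_le _ _).trans ?_
      have := hB θ hθ
      have h3 : ‖zz s φ‖ = s := by rw [norm_zz, abs_of_pos hs]
      rw [h3]; linarith
    exact (Real.log_le_self (norm_nonneg _)).trans h1
  unfold MeasureTheory.IntegrableOn
  rw [MeasureTheory.Measure.volume_eq_prod, ← MeasureTheory.Measure.prod_restrict]
  rw [MeasureTheory.integrable_prod_iff hmeas.aestronglyMeasurable]
  rw [Set.uIoc_of_le (by positivity)]
  constructor
  · refine Filter.Eventually.of_forall fun θ => ?_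
    have := (hslice θ).1
    exact this
  · have hD : ∃ D, ∀ θ ∈ Set.Icc (0:ℝ) (2 * Real.pi), ‖max (Real.log ‖γ θ‖) (Real.log s)‖ ≤ D := by
      apply isCompact_Icc.exists_bound_of_continuousOn
      apply Continuous.continuousOn
      exact (Continuous.log hγ.norm (fun θ => norm_ne_zero_iff.2 (h0 θ))).max continuous_const
    obtain ⟨D, hD⟩ := hD
    refine MeasureTheory.Measure.integrableOn_of_bounded (M := 2 * Real.pi * (2 * C) + 2 * Real.pi * D) (by rw [Real.volume_Ioc]; exact ENNReal.ofReal_ne_top) ?_ ?_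
    · exact (hmeas.norm.stronglyMeasurable.integral_prod_right').aestronglyMeasurable
    · rw [MeasureTheory.ae_restrict_iff' measurableSet_Ioc]
      refine Filter.Eventually.of_forall fun θ hθ => ?_
      have hθ' : θ ∈ Set.Icc (0:ℝ) (2 * Real.pi) := Set.Ioc_subset_Icc_self hθ
      rw [Real.norm_of_nonneg (MeasureTheory.integral_nonneg fun _ => norm_nonneg _)]
      simp only [Function.uncurry_apply_pair]
      rw [← intervalIntegral.integral_of_le (by positivity)]
      calc ∫ φ in (0:ℝ)..(2 * Real.pi), ‖Real.log ‖γ θ - zz s φ‖‖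
          ≤ ∫ φ in (0:ℝ)..(2 * Real.pi), (2 * C - Real.log ‖γ θ - zz s φ‖) := by
            apply intervalIntegral.integral_mono_on (by positivity) (hslice θ).norm
              (intervalIntegrable_const.sub (hslice θ))
            intro φ _
            have := hup θ hθ' φ
            rw [Real.norm_eq_abs, abs_le']
            constructor <;> linarith [add_nonneg hB0 hs.le]
        _ = 2 * Real.pi * (2 * C) - 2 * Real.pi * max (Real.log ‖γ θ‖) (Real.log s) := by
            rw [intervalIntegral.integral_sub intervalIntegrable_const (hslice θ), inner_avg _ (h0 θ) s hs]
            simp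
            ring
        _ ≤ _ := by
            have := hD θ hθ'
            rw [Real.norm_eq_abs] at this
            have := neg_abs_le (max (Real.log ‖γ θ‖) (Real.log s))
            nlinarith

theorem avg_swap (γ : ℝ → ℂ) (hγ : Continuous γ) (h0 : ∀ θ, γ θ ≠ 0) (s : ℝ) (hs : 0 < s) :
    IntervalIntegrable (fun φ => ∫ θ in (0:ℝ)..(2 * Real.pi), Real.log ‖γ θ - zz s φ‖)
      MeasureTheory.volume 0 (2 * Real.pi) ∧
    ∫ φ in (0:ℝ)..(2 * Real.pi), (∫ θ in (0:ℝ)..(2 * Real.pi), Real.log ‖γ θ - zz s φ‖)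
      = 2 * Real.pi * ∫ θ in (0:ℝ)..(2 * Real.pi), max (Real.log ‖γ θ‖) (Real.log s) := by
  have hI := avg_integrable γ hγ h0 s hs
  have hpi := Real.pi_pos
  constructor
  · rw [intervalIntegrable_iff]
    have := hI
    unfold MeasureTheory.IntegrableOn at this
    rw [MeasureTheory.Measure.volume_eq_prod, ← MeasureTheory.Measure.prod_restrict] at this
    have := this.integral_prod_right
    simp only [intervalIntegral.integral_of_le (show (0:ℝ) ≤ 2 * Real.pi by positivity)]
    rw [Set.uIoc_of_le (by positivity)] at this ⊢
    exact this
  · rw [← MeasureTheory.intervalIntegral_intervalIntegral_swap hI]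
    rw [← intervalIntegral.integral_const_mul]
    apply intervalIntegral.integral_congr
    intro θ _
    exact inner_avg _ (h0 θ) s hs

theorem hH_of (g ζ : ℂ → ℂ) (p : ℕ) (hp : 1 ≤ p)
    (hζ : DifferentiableOn ℂ ζ (Metric.ball (0:ℂ) 1))
    (hg : ∀ z ∈ Metric.ball (0:ℂ) 1, g z = Complex.exp (2 * p * ζ z))
    (hfac : ∀ c : ℂ, ∃ (S : Multiset ℂ) (h : ℂ → ℂ), Multiset.card S ≤ p ∧
      DifferentiableOn ℂ h (Metric.ball (0:ℂ) 1) ∧ (∀ z ∈ Metric.ball (0:ℂ) 1, h z ≠ 0) ∧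
      ∀ z ∈ Metric.ball (0:ℂ) 1, g z - c = (S.map (fun u => z - u)).prod * h z) :
    ∀ t r₁ r₂ : ℝ, 0 < r₁ → r₁ < r₂ → r₂ < 1 →
     (∫ θ in (0:ℝ)..(2 * Real.pi), max (tz ζ r₂ θ).re t) - (∫ θ in (0:ℝ)..(2 * Real.pi), max (tz ζ r₁ θ).re t)
       ≤ Real.pi * Real.log (r₂/r₁) := by
  intro t r₁ r₂ h1 h12 h2
  have hpi := Real.pi_pos
  have hp' : (0:ℝ) < p := by exact_mod_cast hp
  set s := Real.exp (2 * p * t) with hs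
  have hs0 : 0 < s := Real.exp_pos _
  have key : ∀ r, 0 < r → r < 1 →
     IntervalIntegrable (fun φ => ∫ θ in (0:ℝ)..(2 * Real.pi), Real.log ‖g (zz r θ) - zz s φ‖)
      MeasureTheory.volume 0 (2 * Real.pi) ∧
    ∫ φ in (0:ℝ)..(2 * Real.pi), (∫ θ in (0:ℝ)..(2 * Real.pi), Real.log ‖g (zz r θ) - zz s φ‖)
      = 2 * Real.pi * (2 * p * ∫ θ in (0:ℝ)..(2 * Real.pi), max (tz ζ r θ).re t) := by
    intro r hr hr1
    have hm : ∀ θ, zz r θ ∈ Metric.ball (0:ℂ) 1 := fun θ => zz_mem ⟨by linarith, hr1⟩ θ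
    have hcz : Continuous (tz ζ r) := zz_cont hζ.continuousOn ⟨by linarith, hr1⟩
    have e : (fun θ => g (zz r θ)) = fun θ => Complex.exp (2 * p * tz ζ r θ) :=
      funext fun θ => hg _ (hm θ)
    have hcont : Continuous fun θ => g (zz r θ) := by rw [e]; fun_prop
    have h := avg_swap (fun θ => g (zz r θ)) hcont (fun θ => by
      rw [hg _ (hm θ)]; exact Complex.exp_ne_zero _) s hs0
    refine ⟨h.1, h.2.trans ?_⟩
    congr 1
    rw [← intervalIntegral.integral_const_mul]
    apply intervalIntegral.integral_congr
    intro θ _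
    have e1 : Real.log ‖g (zz r θ)‖ = 2 * p * (tz ζ r θ).re := by
      rw [hg _ (hm θ), Complex.norm_exp, Real.log_exp]
      simp [tz]
    have e2 : Real.log s = 2 * p * t := by rw [hs, Real.log_exp]
    simp only [e1, e2]
    rw [mul_max_of_nonneg _ _ (by positivity)]
  obtain ⟨i1, k1⟩ := key r₁ h1 (h12.trans h2)
  obtain ⟨i2, k2⟩ := key r₂ (h1.trans h12) h2
  have M := intervalIntegral.integral_mono_on (a := 0) (b := 2 * Real.pi) (by positivity) (i2.sub i1)
    (intervalIntegrable_const (c := 2 * Real.pi * (p * Real.log (r₂ / r₁)))) (fun φ _ => by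
      obtain ⟨S, h, a1, a2, a3, a4⟩ := hfac (zz s φ)
      exact jensen_diff (fun z => g z - zz s φ) p h a2 a3 S a1 a4 r₁ r₂ h1 h12 h2)
  rw [intervalIntegral.integral_sub i2 i1, k1, k2, intervalIntegral.integral_const] at M
  rw [smul_eq_mul, sub_zero, ← mul_sub, ← mul_sub] at M
  have M2 := le_of_mul_le_mul_left M (by positivity)
  have : (2 * p * ((∫ θ in (0:ℝ)..(2 * Real.pi), max (tz ζ r₂ θ).re t) - (∫ θ in (0:ℝ)..(2 * Real.pi), max (tz ζ r₁ θ).re t)))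
     ≤ 2 * p * (Real.pi * Real.log (r₂/r₁)) := by linarith
  exact le_of_mul_le_mul_left this (by positivity)

def FacP (p : ℕ) (g : ℂ → ℂ) : Prop :=
  ∀ c : ℂ, ∃ (S : Multiset ℂ) (h : ℂ → ℂ), Multiset.card S ≤ p ∧
      DifferentiableOn ℂ h (Metric.ball (0:ℂ) 1) ∧ (∀ z ∈ Metric.ball (0:ℂ) 1, h z ≠ 0) ∧
      ∀ z ∈ Metric.ball (0:ℂ) 1, g z - c = (S.map (fun u => z - u)).prod * h z

theorem exp_log_exists (g : ℂ → ℂ) (hg : DifferentiableOn ℂ g (Metric.ball (0:ℂ) 1))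
    (h0 : ∀ z ∈ Metric.ball (0:ℂ) 1, g z ≠ 0) :
    ∃ L : ℂ → ℂ, L 0 = 0 ∧ (∀ z ∈ Metric.ball (0:ℂ) 1, HasDerivAt L (deriv g z / g z) z) ∧
      ∀ z ∈ Metric.ball (0:ℂ) 1, g z = g 0 * Complex.exp (L z) := by
  have hd : DifferentiableOn ℂ (fun z => deriv g z / g z) (Metric.ball (0:ℂ) 1) :=
    (hg.deriv Metric.isOpen_ball).div hg h0
  obtain ⟨L, hL0, hL⟩ := hd.isExactOn_ball.with_val_at 0 0
  refine ⟨L, hL0, hL, fun z hz => ?_⟩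
  have hD : ∀ z ∈ Metric.ball (0:ℂ) 1, HasDerivAt (fun z => g z * Complex.exp (- L z)) 0 z := by
    intro z hz
    have h1 : HasDerivAt g (deriv g z) z := (hg.differentiableAt (Metric.isOpen_ball.mem_nhds hz)).hasDerivAt
    refine (h1.mul ((hL z hz).neg.cexp)).congr_deriv ?_
    have := h0 z hz
    field_simp
    simp
  have := Metric.isOpen_ball.is_const_of_deriv_eq_zero (convex_ball (0:ℂ) 1).isPreconnected
    (f := fun z => g z * Complex.exp (- L z))
    (fun z hz => (hD z hz).differentiableAt.differentiableWithinAt) (fun z hz => (hD z hz).deriv) hz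
    (Metric.mem_ball_self one_pos)
  simp only [hL0, neg_zero, Complex.exp_zero, mul_one] at this
  rw [← this, mul_assoc, ← Complex.exp_add]
  simp

theorem key_zero (p : ℕ) (hp : 1 ≤ p) (g : ℂ → ℂ) (hg : DifferentiableOn ℂ g (Metric.ball (0:ℂ) 1))
    (h0 : ∀ z ∈ Metric.ball (0:ℂ) 1, g z ≠ 0) (hF : FacP p g) : ‖deriv g 0 / g 0‖ ≤ 4 * p := by
  have hp' : (0:ℝ) < p := by exact_mod_cast hp
  have hpc : (p:ℂ) ≠ 0 := by exact_mod_cast hp'.ne'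
  have m0 : (0:ℂ) ∈ Metric.ball (0:ℂ) 1 := Metric.mem_ball_self one_pos
  have g0 := h0 0 m0
  obtain ⟨L, hL0, hL, hgL⟩ := exp_log_exists g hg h0
  have hd : DifferentiableOn ℂ (fun z => deriv g z / g z / (2 * p)) (Metric.ball (0:ℂ) 1) :=
    ((hg.deriv Metric.isOpen_ball).div hg h0).div_const _
  have hζ : ∀ z ∈ Metric.ball (0:ℂ) 1, HasDerivAt (fun z => L z / (2 * p)) (deriv g z / g z / (2 * p)) z :=
    fun z hz => (hL z hz).div_const _
  have hζd : DifferentiableOn ℂ (fun z => L z / (2 * p)) (Metric.ball (0:ℂ) 1) :=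
    fun z hz => (hζ z hz).differentiableAt.differentiableWithinAt
  have hH := hH_of (fun z => g z / g 0) (fun z => L z / (2 * p)) p hp hζd (by
    intro z hz
    simp only [hgL z hz]
    field_simp) (by
    intro c
    obtain ⟨S, h, a1, a2, a3, a4⟩ := hF (c * g 0)
    refine ⟨S, fun z => h z / g 0, a1, a2.div_const _, fun z hz => div_ne_zero (a3 z hz) g0, ?_⟩
    intro z hz
    simp only
    rw [← mul_div_assoc, ← a4 z hz]
    field_simp)
  have hm : ∃ c : ℝ, ∀ r ∈ Set.Ioo (0:ℝ) 1,
      ∫ θ in (0:ℝ)..(2 * Real.pi), (tz (fun z => L z / (2 * p)) r θ).re = c := by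
    refine ⟨0, fun r hr => ?_⟩
    have hsub : Metric.closedBall (0:ℂ) |r| ⊆ Metric.ball (0:ℂ) 1 := by
      rw [abs_of_pos hr.1]; exact Metric.closedBall_subset_ball hr.2
    have h1 : Real.circleAverage (fun z => L z / (2 * p)) 0 r = L 0 / (2 * p) := by
      apply DiffContOnCl.circleAverage
      exact DifferentiableOn.diffContOnCl (hζd.mono (Metric.closure_ball_subset_closedBall.trans hsub))
    rw [hL0, zero_div, Real.circleAverage, smul_eq_zero] at h1
    have hpi := Real.pi_pos
    have h2 := h1.resolve_left (by positivity)
    have hc : Continuous (tz (fun z => L z / (2 * p)) r) := zz_cont hζd.continuousOn ⟨by linarith [hr.1], hr.2⟩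
    have h3 := intervalIntegral.intervalIntegral_re (𝕜 := ℂ) (hc.intervalIntegrable (μ := MeasureTheory.volume) 0 (2 * Real.pi))
    simp only [circleMap_zz] at h2
    have h4 : ∫ θ in (0:ℝ)..(2 * Real.pi), tz (fun z => L z / (2 * p)) r θ = 0 := h2
    rw [h4] at h3
    simpa using h3
  have hκ := thmB2 hζ hd.continuousOn hm hH
  have hB := thmB1 hζ (fun z hz => (hd.differentiableAt (Metric.isOpen_ball.mem_nhds hz)).hasDerivAt)
    (hd.deriv Metric.isOpen_ball).continuousOn (by simp [hL0]) hκ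
  rw [norm_div] at hB
  have : ‖(2 * p : ℂ)‖ = 2 * p := by simp
  rw [this, div_le_iff₀ (by positivity)] at hB
  linarith

theorem mob_den {a z : ℂ} (ha : ‖a‖ < 1) (hz : ‖z‖ < 1) : 1 + starRingEnd ℂ a * z ≠ 0 := by
  intro h
  have h1 : starRingEnd ℂ a * z = -1 := by linear_combination h
  have h2 : ‖a‖ * ‖z‖ = 1 := by
    have := congrArg norm h1
    simpa using this
  nlinarith [norm_nonneg a, norm_nonneg z]

theorem mob_mem {a z : ℂ} (ha : ‖a‖ < 1) (hz : ‖z‖ < 1) : ‖(z + a) / (1 + starRingEnd ℂ a * z)‖ < 1 := by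
  have hd := mob_den ha hz
  rw [norm_div, div_lt_one (norm_pos_iff.2 hd)]
  have e : ‖1 + starRingEnd ℂ a * z‖ ^ 2 - ‖z + a‖ ^ 2 = (1 - ‖a‖ ^ 2) * (1 - ‖z‖ ^ 2) := by
    simp only [← Complex.normSq_eq_norm_sq, Complex.normSq_apply]
    simp
    ring
  have h1 : 0 < (1 - ‖a‖ ^ 2) * (1 - ‖z‖ ^ 2) := by
    apply mul_pos <;> nlinarith [norm_nonneg a, norm_nonneg z]
  apply lt_of_pow_lt_pow_left₀ 2 (norm_nonneg _)
  linarith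

theorem mob_fac {a : ℂ} (ha : ‖a‖ < 1) (S : Multiset ℂ) :
    ∃ (S' : Multiset ℂ) (k : ℂ → ℂ), Multiset.card S' ≤ Multiset.card S ∧
      DifferentiableOn ℂ k (Metric.ball (0:ℂ) 1) ∧ (∀ z ∈ Metric.ball (0:ℂ) 1, k z ≠ 0) ∧
      ∀ z ∈ Metric.ball (0:ℂ) 1, (S.map (fun u => (z + a) / (1 + starRingEnd ℂ a * z) - u)).prod
        = (S'.map (fun u => z - u)).prod * k z := by
  have hden : ∀ z ∈ Metric.ball (0:ℂ) 1, 1 + starRingEnd ℂ a * z ≠ 0 :=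
    fun z hz => mob_den ha (mem_ball_zero_iff.1 hz)
  induction S using Multiset.induction_on with
  | empty => exact ⟨0, fun _ => 1, by simp, by fun_prop, by simp, by simp⟩
  | cons u S ih =>
    obtain ⟨S', k, a1, a2, a3, a4⟩ := ih
    by_cases hu : 1 - u * starRingEnd ℂ a = 0
    · refine ⟨S', fun z => (a - u) / (1 + starRingEnd ℂ a * z) * k z, by simp; omega, ?_, ?_, ?_⟩
      · exact (DifferentiableOn.div (by fun_prop) (by fun_prop) hden).mul a2
      · intro z hz
        apply mul_ne_zero (div_ne_zero _ (hden z hz)) (a3 z hz)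
        intro h
        have : u = a := by linear_combination -h
        subst this
        rw [Complex.mul_conj, Complex.normSq_eq_norm_sq] at hu
        have h3 : (1:ℝ) - ‖u‖ ^ 2 = 0 := by exact_mod_cast hu
        nlinarith [norm_nonneg u]
      · intro z hz
        simp only [Multiset.map_cons, Multiset.prod_cons]
        rw [a4 z hz]
        have := hden z hz
        have e : (z + a) / (1 + starRingEnd ℂ a * z) - u = (a - u) / (1 + starRingEnd ℂ a * z) := by
          rw [div_sub' this]
          congr 1
          linear_combination z * hu
        rw [e]; ring
    · refine ⟨(u - a) / (1 - u * starRingEnd ℂ a) ::ₘ S', fun z => (1 - u * starRingEnd ℂ a) / (1 + starRingEnd ℂ a * z) * k z, by simpa using a1, ?_, ?_, ?_⟩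
      · exact (DifferentiableOn.div (by fun_prop) (by fun_prop) hden).mul a2
      · intro z hz
        exact mul_ne_zero (div_ne_zero hu (hden z hz)) (a3 z hz)
      · intro z hz
        simp only [Multiset.map_cons, Multiset.prod_cons]
        rw [a4 z hz]
        have := hden z hz
        have e : (z + a) / (1 + starRingEnd ℂ a * z) - u = (z - (u - a) / (1 - u * starRingEnd ℂ a))
            * ((1 - u * starRingEnd ℂ a) / (1 + starRingEnd ℂ a * z)) := by
          rw [← mul_div_assoc, sub_mul, div_mul_cancel₀ _ hu, div_sub' this]
          congr 1
          ring
        rw [e]; ring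

theorem key_a (p : ℕ) (hp : 1 ≤ p) (g : ℂ → ℂ) (hg : DifferentiableOn ℂ g (Metric.ball (0:ℂ) 1))
    (h0 : ∀ z ∈ Metric.ball (0:ℂ) 1, g z ≠ 0) (hF : FacP p g) (a : ℂ) (ha : ‖a‖ < 1) :
    ‖deriv g a / g a‖ ≤ 4 * p / (1 - ‖a‖ ^ 2) := by
  set φ : ℂ → ℂ := fun z => (z + a) / (1 + starRingEnd ℂ a * z) with hφ
  have hden : ∀ z ∈ Metric.ball (0:ℂ) 1, 1 + starRingEnd ℂ a * z ≠ 0 :=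
    fun z hz => mob_den ha (mem_ball_zero_iff.1 hz)
  have hmaps : Set.MapsTo φ (Metric.ball (0:ℂ) 1) (Metric.ball (0:ℂ) 1) :=
    fun z hz => mem_ball_zero_iff.2 (mob_mem ha (mem_ball_zero_iff.1 hz))
  have hφd : DifferentiableOn ℂ φ (Metric.ball (0:ℂ) 1) :=
    DifferentiableOn.div (by fun_prop) (by fun_prop) hden
  have m0 : (0:ℂ) ∈ Metric.ball (0:ℂ) 1 := Metric.mem_ball_self one_pos
  have hφ0 : φ 0 = a := by simp [hφ]
  have hφ' : HasDerivAt φ (1 - (‖a‖:ℂ) ^ 2) 0 := by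
    have h1 : HasDerivAt (fun z : ℂ => z + a) 1 0 := (hasDerivAt_id 0).add_const a
    have h2 : HasDerivAt (fun z : ℂ => 1 + starRingEnd ℂ a * z) (starRingEnd ℂ a) 0 := by
      have := ((hasDerivAt_id (0:ℂ)).const_mul (starRingEnd ℂ a)).const_add 1
      simpa using this
    refine (h1.div h2 (hden 0 m0)).congr_deriv ?_
    rw [← Complex.mul_conj']
    simp
  have hk := key_zero p hp (g ∘ φ) (hg.comp hφd hmaps) (fun z hz => h0 _ (hmaps hz)) (by
    intro c
    obtain ⟨S, h, a1, a2, a3, a4⟩ := hF c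
    obtain ⟨S', k, b1, b2, b3, b4⟩ := mob_fac ha S
    refine ⟨S', fun z => k z * h (φ z), b1.trans a1, b2.mul (a2.comp hφd hmaps),
      fun z hz => mul_ne_zero (b3 z hz) (a3 _ (hmaps hz)), fun z hz => ?_⟩
    rw [← mul_assoc, ← b4 z hz]
    exact a4 _ (hmaps hz))
  have hga : HasDerivAt g (deriv g a) (φ 0) := by
    rw [hφ0]
    exact (hg.differentiableAt (Metric.isOpen_ball.mem_nhds (mem_ball_zero_iff.2 ha))).hasDerivAt
  rw [(hga.comp 0 hφ').deriv, Function.comp_apply, hφ0, mul_div_right_comm, norm_mul] at hk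
  have hpos : 0 < 1 - ‖a‖ ^ 2 := by nlinarith [norm_nonneg a]
  have : ‖(1 - (‖a‖:ℂ) ^ 2)‖ = 1 - ‖a‖ ^ 2 := by
    rw [← Complex.ofReal_pow, ← Complex.ofReal_one, ← Complex.ofReal_sub, Complex.norm_real, Real.norm_of_nonneg hpos.le]
  rw [this] at hk
  rw [le_div_iff₀ hpos]
  exact hk

theorem growth (p : ℕ) (hp : 1 ≤ p) (g : ℂ → ℂ) (hg : DifferentiableOn ℂ g (Metric.ball (0:ℂ) 1))
    (h0 : ∀ z ∈ Metric.ball (0:ℂ) 1, g z ≠ 0) (hF : FacP p g) (z : ℂ) (hz : ‖z‖ < 1) :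
    ‖g z‖ ≤ ‖g 0‖ * ((1 + ‖z‖) / (1 - ‖z‖)) ^ (2 * p) ∧
    ‖g 0‖ ≤ ‖g z‖ * ((1 + ‖z‖) / (1 - ‖z‖)) ^ (2 * p) := by
  obtain ⟨L, hL0, hL, hgL⟩ := exp_log_exists g hg h0
  set ρ := ‖z‖ with hρ
  have hρ0 : 0 ≤ ρ := norm_nonneg z
  have hmem : ∀ t ∈ Set.Icc (0:ℝ) 1, ‖(t:ℂ) * z‖ < 1 := by
    intro t ht
    rw [norm_mul, Complex.norm_real, Real.norm_of_nonneg ht.1, ← hρ]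
    nlinarith [ht.1, ht.2]
  have hL' : ∀ t ∈ Set.Icc (0:ℝ) 1,
      HasDerivAt (fun t : ℝ => L ((t:ℂ) * z)) (deriv g (t * z) / g (t * z) * z) t := by
    intro t ht
    have h1 := hL _ (mem_ball_zero_iff.2 (hmem t ht))
    have h2 : HasDerivAt (fun t : ℝ => (t:ℂ) * z) z t := by
      simpa using (Complex.ofRealCLM.hasDerivAt (x := t)).mul_const z
    exact h1.comp t h2
  have hB : ∀ t ∈ Set.Icc (0:ℝ) 1, HasDerivAt (fun t : ℝ => 2 * p * (Real.log (1 + t * ρ) - Real.log (1 - t * ρ)))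
      (4 * p / (1 - (t * ρ) ^ 2) * ρ) t := by
    intro t ht
    have h3 : t * ρ < 1 := by nlinarith [ht.1, ht.2]
    have h4 : 0 ≤ t * ρ := mul_nonneg ht.1 hρ0
    have a1 : (1 + t * ρ) ≠ 0 := by positivity
    have a2 : (1 - t * ρ) ≠ 0 := by linarith
    have e1 : HasDerivAt (fun t : ℝ => 1 + t * ρ) ρ t := by
      simpa using ((hasDerivAt_id t).mul_const ρ).const_add 1
    have e2 : HasDerivAt (fun t : ℝ => 1 - t * ρ) (-ρ) t := by
      simpa using ((hasDerivAt_id t).mul_const ρ).const_sub 1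
    refine (((e1.log a1).sub (e2.log a2)).const_mul _).congr_deriv ?_
    have : 1 - (t * ρ) ^ 2 = (1 + t * ρ) * (1 - t * ρ) := by ring
    rw [this]
    clear this e1 e2
    generalize t * ρ = x at *
    field_simp
    ring
  have main : ‖L z‖ ≤ 2 * p * (Real.log (1 + ρ) - Real.log (1 - ρ)) := by
    have := image_norm_le_of_norm_deriv_right_le_deriv_boundary' (a := 0) (b := 1)
      (f := fun t : ℝ => L ((t:ℂ) * z)) (f' := fun t : ℝ => deriv g (t * z) / g (t * z) * z)
      (fun t ht => (hL' t ht).continuousAt.continuousWithinAt)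
      (fun t ht => (hL' t (Set.Ico_subset_Icc_self ht)).hasDerivWithinAt)
      (B := fun t : ℝ => 2 * p * (Real.log (1 + t * ρ) - Real.log (1 - t * ρ)))
      (B' := fun t : ℝ => 4 * p / (1 - (t * ρ) ^ 2) * ρ)
      (by simp [hL0])
      (fun t ht => (hB t ht).continuousAt.continuousWithinAt)
      (fun t ht => (hB t (Set.Ico_subset_Icc_self ht)).hasDerivWithinAt)
      (fun t ht => by
        rw [norm_mul, ← hρ]
        apply mul_le_mul_of_nonneg_right _ hρ0
        have := key_a p hp g hg h0 hF _ (hmem t (Set.Ico_subset_Icc_self ht))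
        rwa [norm_mul, Complex.norm_real, Real.norm_of_nonneg ht.1, ← hρ] at this)
      (Set.right_mem_Icc.2 zero_le_one)
    simpa using this
  have hpos : 0 < (1 + ρ) / (1 - ρ) := div_pos (by linarith) (by linarith)
  have hpw : ((1 + ρ) / (1 - ρ)) ^ (2 * p) = Real.exp (2 * p * (Real.log (1 + ρ) - Real.log (1 - ρ))) := by
    rw [← Real.log_div (by linarith) (by linarith), ← Real.exp_log (pow_pos hpos _), Real.log_pow]
    push_cast
    rfl
  rw [hpw, hgL z (mem_ball_zero_iff.2 hz), norm_mul, Complex.norm_exp]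
  have hre := abs_le.1 ((Complex.abs_re_le_norm (L z)).trans main)
  constructor
  · gcongr
    exact hre.2
  · rw [mul_assoc, ← Real.exp_add]
    apply le_mul_of_one_le_right (norm_nonneg _)
    apply Real.one_le_exp
    linarith [hre.1]

theorem solCount_mono_mul (U K : Set ℂ) (hU : IsOpen U) (hK : K ⊆ U) (F Q G : ℂ → ℂ)
    (hQ : Differentiable ℂ Q) (hG : DifferentiableOn ℂ G U) (hF : ∀ z, F z = Q z * G z) :
    solCount G K ≤ solCount F K := by
  unfold solCount
  apply Summable.tsum_le_tsum _ (enat_summable _) (enat_summable _)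
  intro z
  have hz : (z:ℂ) ∈ U := hK z.2
  have aG : AnalyticAt ℂ G z := hG.analyticAt (hU.mem_nhds hz)
  have aQ : AnalyticAt ℂ Q z := hQ.analyticAt z
  have e : F = Q * G := funext hF
  have aF : AnalyticAt ℂ F z := by rw [e]; exact aQ.mul aG
  unfold ordAt
  rw [dif_pos aG, dif_pos aF, e, analyticOrderAt_mul aQ aG]
  exact le_add_self

theorem facP_of (U : Set ℂ) (hU : IsOpen U) (hU1 : Metric.closedBall (0 : ℂ) 1 ⊆ U)
    (f : ℂ → ℂ) (s p : ℕ) (hval : IsSPValentOn f (Metric.closedBall (0 : ℂ) 1) s p)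
    (S : Multiset ℂ) (g : ℂ → ℂ) (hS : Multiset.card S = s) (hg : DifferentiableOn ℂ g U)
    (hfg : ∀ z, f z = (S.map (fun x => z - x)).prod * g z) : FacP p g := by
  intro c
  set P : Polynomial ℂ := Polynomial.C c * (S.map (fun x => Polynomial.X - Polynomial.C x)).prod with hP
  have hPd : P.degree ≤ (s:ℕ) := by
    rw [hP]
    have hC : (Polynomial.C c).degree ≤ 0 := Polynomial.degree_C_le
    refine (Polynomial.degree_mul_le _ _).trans ((add_le_add_left hC _).trans ?_)
    rw [zero_add, Polynomial.degree_multiset_prod_of_monic]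
    · simp [hS]
    · intro q hq
      rw [Multiset.mem_map] at hq
      obtain ⟨x, _, rfl⟩ := hq
      exact Polynomial.monic_X_sub_C x
  have hPe : ∀ z, P.eval z = c * (S.map (fun x => z - x)).prod := by
    intro z
    rw [hP, Polynomial.eval_mul, Polynomial.eval_C, Polynomial.eval_multiset_prod, Multiset.map_map]
    simp
  have h1 : solCount (fun z => g z - c) (Metric.closedBall (0:ℂ) 1) ≤ (p:ℕ∞) := by
    refine (solCount_mono_mul U _ hU hU1 (fun z => f z - P.eval z) _ _ (prod_differentiable S)
      (hg.sub_const c) (fun z => ?_)).trans (hval P hPd)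
    rw [hPe, hfg]
    ring
  obtain ⟨n, hn⟩ := ENat.ne_top_iff_exists.1 (ne_top_of_le_ne_top (ENat.natCast_ne_top p) h1)
  obtain ⟨T, h, t1, _, t3, t4, t5⟩ := factor_exists U hU _ hU1 n (fun z => g z - c) (hg.sub_const c) hn.symm
  refine ⟨T, h, ?_, t3.mono (Metric.ball_subset_closedBall.trans hU1),
    fun z hz => t4 z (Metric.ball_subset_closedBall hz), fun z _ => t5 z⟩
  rw [← hn] at h1
  rw [t1]
  exact_mod_cast h1

theorem cartan_zero (α : ℝ) (hα : 0 < α) (Z : Set ℂ) : cartanMeasure 0 α Z ≤ 0 := by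
  unfold cartanMeasure
  have h0 : ∀ t ∈ {t : ℝ | ∃ (p : ℕ) (w : Fin p → ℂ) (r : Fin p → ℝ), p ≤ 0 ∧ (∀ j, 0 < r j) ∧
    Z ⊆ (⋃ j, Metric.closedBall (w j) (r j)) ∧ t = (∑ j, r j ^ α) ^ (1 / α)}, t = 0 := by
    rintro t ⟨p, w, r, hp, -, -, rfl⟩
    obtain rfl : p = 0 := by omega
    simp only [Finset.univ_eq_empty, Finset.sum_empty]
    exact Real.zero_rpow (by positivity)
  rcases Set.eq_empty_or_nonempty {t : ℝ | ∃ (p : ℕ) (w : Fin p → ℂ) (r : Fin p → ℝ), p ≤ 0 ∧ (∀ j, 0 < r j) ∧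
    Z ⊆ (⋃ j, Metric.closedBall (w j) (r j)) ∧ t = (∑ j, r j ^ α) ^ (1 / α)} with h | ⟨t, ht⟩
  · rw [h]; simp
  · have e := h0 t ht
    subst e
    exact csInf_le ⟨0, fun t ht => (h0 t ht).ge⟩ ht

theorem prod_norm_le (S : Multiset ℂ) (hS : ∀ x ∈ S, x ∈ Metric.closedBall (0:ℂ) 1) (z : ℂ) (hz : ‖z‖ ≤ 1) :
    ‖(S.map (fun x => z - x)).prod‖ ≤ 2 ^ Multiset.card S := by
  induction S using Multiset.induction_on with
  | empty => simp
  | cons a S ih =>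
    simp only [Multiset.map_cons, Multiset.prod_cons, Multiset.card_cons]
    rw [norm_mul, pow_succ']
    have ha := mem_closedBall_zero_iff.1 (hS a (by simp))
    have h1 : ‖z - a‖ ≤ 2 := (norm_sub_le _ _).trans (by linarith)
    have h2 := ih (fun x hx => hS x (by simp [hx]))
    gcongr

theorem prod_norm_eq (S : Multiset ℂ) (z : ℂ) :
    ‖(S.map (fun x => z - x)).prod‖ = (S.map (fun x => ‖z - x‖)).prod := by
  induction S using Multiset.induction_on with
  | empty => simp
  | cons a S ih =>
    simp only [Multiset.map_cons, Multiset.prod_cons, norm_mul, ih]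

theorem ratio_mono {x y : ℝ} (hx : 0 ≤ x) (hxy : x ≤ y) (hy : y < 1) (n : ℕ) :
    ((1 + x) / (1 - x)) ^ n ≤ ((1 + y) / (1 - y)) ^ n := by
  have : 0 < 1 - y := by linarith
  have : 0 < 1 - x := by linarith
  have : 0 ≤ 1 + y := by linarith
  gcongr
/-- Remez-type inequality for `(s,p)`-valent functions: if `f` is analytic in a
neighbourhood of the closed unit disk, has exactly `s` zeroes in it (counted with
multiplicity) and is `(s,p)`-valent there, and `Z` is a subset of the open unit disk
with `ρ = min{η : Z ⊆ D_η} < 1`, then for every `R < 1` and every `α > 0` with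
`c_{s,α}(Z) > 0`,
`max_{|z| ≤ R} |f| ≤ σ_p(R,ρ) (6 e^{1/α} / c_{s,α}(Z))^s max_Z |f|`, where
`σ_p(R,ρ) = ((1+R)/(1-R) · (1+ρ)/(1-ρ))^{2p}`. -/
theorem statement19 (U : Set ℂ) (hU : IsOpen U)
    (hU1 : Metric.closedBall (0 : ℂ) 1 ⊆ U)
    (f : ℂ → ℂ) (hf : AnalyticOnNhd ℂ f U) (s p : ℕ)
    (hzeros : solCount f (Metric.closedBall (0 : ℂ) 1) = (s : ℕ∞))
    (hval : IsSPValentOn f (Metric.closedBall (0 : ℂ) 1) s p)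
    (Z : Set ℂ) (hZ : Z ⊆ Metric.ball (0 : ℂ) 1)
    (ρ : ℝ) (hρZ : Z ⊆ Metric.closedBall (0 : ℂ) ρ)
    (hρmin : ∀ η : ℝ, Z ⊆ Metric.closedBall (0 : ℂ) η → ρ ≤ η) (hρ1 : ρ < 1)
    (R : ℝ) (hR0 : 0 < R) (hR1 : R < 1)
    (α : ℝ) (hα : 0 < α) (hc : 0 < cartanMeasure s α Z) :
    ∀ z ∈ Metric.closedBall (0 : ℂ) R,
      ‖f z‖ ≤
        (((1 + R) / (1 - R)) * ((1 + ρ) / (1 - ρ))) ^ (2 * p) *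
          (6 * Real.exp (1 / α) / cartanMeasure s α Z) ^ s *
          sSup ((fun w => ‖f w‖) '' Z) := by
  have hs : 1 ≤ s := by
    rcases Nat.eq_zero_or_pos s with h | h
    · subst h
      exact absurd (cartan_zero α hα Z) (not_le.2 hc)
    · exact h
  have hp : 1 ≤ p := by
    have h := hval 0 (by simp)
    simp only [Polynomial.eval_zero, sub_zero] at h
    rw [hzeros] at h
    exact hs.trans (by exact_mod_cast h)
  obtain ⟨S, g, hS, hSK, hgU, hg0, hfg⟩ := factor_exists U hU _ hU1 s f hf.differentiableOn hzeros
  have hF : FacP p g := facP_of U hU hU1 f s p hval S g hS hgU hfg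
  have hgb : DifferentiableOn ℂ g (Metric.ball (0:ℂ) 1) :=
    hgU.mono (Metric.ball_subset_closedBall.trans hU1)
  have hgb0 : ∀ z ∈ Metric.ball (0:ℂ) 1, g z ≠ 0 := fun z hz => hg0 z (Metric.ball_subset_closedBall hz)
  have hgr := growth p hp g hgb hgb0 hF
  set c := cartanMeasure s α Z with hcdef
  set e := Real.exp (1 / α) with he
  have he0 : 0 < e := Real.exp_pos _
  set h := c / (3 * e) with hh
  have hh0 : 0 < h := by positivity
  have hlt : 2 * h * Real.exp (1 / α) < cartanMeasure s α Z := by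
    rw [← he, ← hcdef, hh]
    have : 2 * (c / (3 * e)) * e = 2 * c / 3 := by field_simp
    rw [this]; linarith
  obtain ⟨z0, hz0, hprod⟩ := cartan_lemma s hs α hα Z S hS h hh0 hlt
  have hz0ρ : ‖z0‖ ≤ ρ := mem_closedBall_zero_iff.1 (hρZ hz0)
  have hρ0 : 0 ≤ ρ := (norm_nonneg _).trans hz0ρ
  have hsup : ‖f z0‖ ≤ sSup ((fun w => ‖f w‖) '' Z) := by
    apply le_csSup _ (Set.mem_image_of_mem _ hz0)
    obtain ⟨B, hB⟩ := (isCompact_closedBall (0:ℂ) 1).exists_bound_of_continuousOn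
      (hf.continuousOn.mono hU1)
    refine ⟨B, ?_⟩
    rintro _ ⟨w, hw, rfl⟩
    exact hB w (Metric.ball_subset_closedBall (hZ hw))
  intro z hz
  have hzR : ‖z‖ ≤ R := mem_closedBall_zero_iff.1 hz
  set A := ((1 + R) / (1 - R)) ^ (2 * p) with hA
  set B := ((1 + ρ) / (1 - ρ)) ^ (2 * p) with hB
  have hA0 : 0 ≤ A := pow_nonneg (div_nonneg (by linarith) (by linarith)) _
  have hB0 : 0 ≤ B := pow_nonneg (div_nonneg (by linarith) (by linarith)) _
  have k1 : ‖g z‖ ≤ ‖g 0‖ * A := (hgr z (by linarith)).1.trans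
    (mul_le_mul_of_nonneg_left (ratio_mono (norm_nonneg z) hzR hR1 _) (norm_nonneg _))
  have k2 : ‖g 0‖ ≤ ‖g z0‖ * B := (hgr z0 (by linarith)).2.trans
    (mul_le_mul_of_nonneg_left (ratio_mono (norm_nonneg z0) hz0ρ hρ1 _) (norm_nonneg _))
  have k3 : ‖f z‖ ≤ 2 ^ s * (‖g 0‖ * A) := by
    rw [hfg z, norm_mul]
    have := prod_norm_le S hSK z (by linarith)
    rw [hS] at this
    gcongr
  have k4 : h ^ s * ‖g z0‖ ≤ ‖f z0‖ := by
    rw [hfg z0, norm_mul, prod_norm_eq]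
    gcongr
  have k5 : ‖g z0‖ ≤ ‖f z0‖ / h ^ s := by
    rw [le_div_iff₀ (by positivity)]; linarith
  have e6 : (6 * e / c) ^ s = 2 ^ s / h ^ s := by
    rw [← div_pow]
    congr 1
    rw [hh]
    field_simp
    norm_num
  rw [mul_pow, e6]
  calc ‖f z‖ ≤ 2 ^ s * (‖g 0‖ * A) := k3
    _ ≤ 2 ^ s * (((‖f z0‖ / h ^ s) * B) * A) := by
        gcongr
        exact k2.trans (by gcongr)
    _ = A * B * (2 ^ s / h ^ s) * ‖f z0‖ := by ring
    _ ≤ A * B * (2 ^ s / h ^ s) * sSup ((fun w => ‖f w‖) '' Z) := by gcongr
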